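/- arXiv:2007.14944 — 6 statements merged into one kernel-verified Lean document; each statement's English description precedes it below -/
import Mathlib

section
/- Let X be a non-negative random variable, not identically 0, determined by n independent trials T₁,…,T_n (i.e. X is a measurable function on the product of n probability spaces). Let r > 0 and let Ω* be a measurable subset of the product space. Suppose that for every outcome x = (x₁,…,x_n) of the trials there exist non-negative reals b₁,…,b_n such that (1) Σ_i b_i² ≤ r·X(x), and (2) for any outcome y, X(y) ≥ X(x) − Σ_{i : x_i ≠ y_i} b_i. Then for any t > 96r·√(E(X)) + 128√r + 8·sup(X)·Pr(Ω*), we have Pr(|X − E(X)| > t) ≤ 4·exp(−t²/(8r·(E(X) + t))) + 4·Pr(Ω*). -/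
open MeasureTheory
open scoped Classical

/-- The product of the `n` probability spaces `Ω i`. -/
noncomputable def prodMeasure {n : ℕ} (Ω : Fin n → Type) [∀ i, MeasureSpace (Ω i)] :
    Measure (∀ i, Ω i) :=
  Measure.pi fun i => (volume : Measure (Ω i))


lemma aux_s (d : ℝ) (hd : 0 ≤ d) : ∃ s : ℝ, 0 ≤ s ∧ s ≤ 1 ∧
    Real.exp (s ^ 2 / 8 + (1 - s) * d) ≤ 2 - Real.exp (-d) := by
  by_cases h : d ≤ 1 / 4
  · refine ⟨4 * d, by linarith, by linarith, ?_⟩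
    have e : (4 * d) ^ 2 / 8 + (1 - 4 * d) * d = d - 2 * d ^ 2 := by ring
    rw [e]
    have h1 := abs_le.1 (Real.abs_exp_sub_one_sub_id_le (x := d - 2 * d ^ 2)
      (abs_le.2 ⟨by nlinarith, by nlinarith⟩))
    have h2 := abs_le.1 (Real.abs_exp_sub_one_sub_id_le (x := -d)
      (abs_le.2 ⟨by nlinarith, by nlinarith⟩))
    have h3 : (d - 2 * d ^ 2) ^ 2 ≤ d ^ 2 := by
      apply pow_le_pow_left₀ <;> nlinarith
    nlinarith [h1.2, h2.2]
  · push Not at h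
    refine ⟨1, by norm_num, le_rfl, ?_⟩
    have h1 := abs_le.1 (Real.abs_exp_sub_one_sub_id_le (x := 1 / 8)
      (abs_le.2 ⟨by norm_num, by norm_num⟩))
    have h2 := abs_le.1 (Real.abs_exp_sub_one_sub_id_le (x := -(1/4))
      (abs_le.2 ⟨by norm_num, by norm_num⟩))
    have h3 : Real.exp (-d) ≤ Real.exp (-(1/4)) := Real.exp_le_exp.2 (by linarith)
    have e : (1:ℝ) ^ 2 / 8 + (1 - 1) * d = 1 / 8 := by ring
    rw [e]
    linarith [h1.2, h2.2]

/-- the analytic step -/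
lemma aux_step {B : Type*} [Fintype B] (f F1 F2 : B → ℝ) (U V K : ℝ) (hU : 0 < U) (hUV : U ≤ V)
    (hK : 0 < K) (h1 : (∑ x, Real.exp (F1 x)) * U ≤ K) (h2 : (∑ x, Real.exp (F2 x)) * V ≤ K)
    (hf : ∀ s : ℝ, 0 ≤ s → s ≤ 1 → ∀ x, f x ≤ (1 - s) * F1 x + s * F2 x + s ^ 2 / 8) :
    ∑ x, Real.exp (f x) ≤ K / V * (2 - U / V) := by
  have hV : 0 < V := hU.trans_le hUV
  obtain ⟨s, hs0, hs1, hs⟩ := aux_s (Real.log (V / U))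
    (Real.log_nonneg (by rw [le_div_iff₀ hU]; linarith))
  have hev : Real.exp (-Real.log (V / U)) = U / V := by
    rw [Real.exp_neg, Real.exp_log (by positivity), inv_div]
  rw [hev] at hs
  set u := Real.log (K / U) with hu
  set v := Real.log (K / V) with hv
  have hd : Real.log (V / U) = u - v := by
    rw [hu, hv, ← Real.log_div (by positivity) (by positivity)]
    congr 1
    field_simp
  have heu : Real.exp u = K / U := Real.exp_log (by positivity)
  have hev' : Real.exp v = K / V := Real.exp_log (by positivity)
  rw [hd] at hs
  have hpt : ∀ x, Real.exp (f x) ≤ Real.exp (v + (s ^ 2 / 8 + (1 - s) * (u - v))) *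
      ((1 - s) * (Real.exp (F1 x) / (K / U)) + s * (Real.exp (F2 x) / (K / V))) := by
    intro x
    have hc := convexOn_exp.2 (Set.mem_univ (F1 x - u)) (Set.mem_univ (F2 x - v))
      (sub_nonneg.2 hs1) hs0 (by ring)
    simp only [smul_eq_mul] at hc
    rw [Real.exp_sub, Real.exp_sub, heu, hev'] at hc
    calc Real.exp (f x) ≤ Real.exp ((v + (s ^ 2 / 8 + (1 - s) * (u - v))) +
          ((1 - s) * (F1 x - u) + s * (F2 x - v))) := by
          apply Real.exp_le_exp.2
          have := hf s hs0 hs1 x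
          linarith
      _ ≤ _ := by
          rw [Real.exp_add]
          exact mul_le_mul_of_nonneg_left hc (Real.exp_pos _).le
  have hsum : ∑ x, ((1 - s) * (Real.exp (F1 x) / (K / U)) + s * (Real.exp (F2 x) / (K / V))) ≤ 1 := by
    rw [Finset.sum_add_distrib, ← Finset.mul_sum, ← Finset.mul_sum, ← Finset.sum_div, ← Finset.sum_div]
    have a1 : (∑ x, Real.exp (F1 x)) / (K / U) ≤ 1 := by
      rw [div_div_eq_mul_div, div_le_one hK]; exact h1
    have a2 : (∑ x, Real.exp (F2 x)) / (K / V) ≤ 1 := by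
      rw [div_div_eq_mul_div, div_le_one hK]; exact h2
    nlinarith [mul_le_mul_of_nonneg_left a1 (sub_nonneg.2 hs1), mul_le_mul_of_nonneg_left a2 hs0]
  calc ∑ x, Real.exp (f x) ≤ _ := Finset.sum_le_sum fun x _ => hpt x
    _ ≤ Real.exp (v + (s ^ 2 / 8 + (1 - s) * (u - v))) * 1 := by
      rw [← Finset.mul_sum]
      exact mul_le_mul_of_nonneg_left hsum (Real.exp_pos _).le
    _ ≤ _ := by
      rw [mul_one, Real.exp_add, hev']
      exact mul_le_mul_of_nonneg_left hs (by positivity)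

/-- weak transport cost -/
noncomputable def wcost {A : Type} [Fintype A] {n : ℕ} (g : (Fin n → A) → ℝ) (x : Fin n → A)
    (ν : (Fin n → A) → ℝ) : ℝ :=
  ∑ y, ν y * g y + (∑ i, (∑ y, if y i ≠ x i then ν y else 0) ^ 2) / 8

lemma wcost_min {A : Type} [Fintype A] [Nonempty A] {n : ℕ} (g : (Fin n → A) → ℝ) (x : Fin n → A) :
    ∃ ν ∈ stdSimplex ℝ (Fin n → A), ∀ ν' ∈ stdSimplex ℝ (Fin n → A), wcost g x ν ≤ wcost g x ν' := by
  have hc : Continuous (wcost g x) := by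
    unfold wcost
    refine Continuous.add (by fun_prop) (Continuous.div_const ?_ _)
    refine continuous_finsetSum _ fun i _ => Continuous.pow ?_ _
    refine continuous_finsetSum _ fun y _ => ?_
    split_ifs <;> fun_prop
  obtain ⟨ν, h1, h2⟩ := (isCompact_stdSimplex ℝ (Fin n → A)).exists_isMinOn
    ⟨_, single_mem_stdSimplex ℝ x⟩ hc.continuousOn
  exact ⟨ν, h1, fun ν' h' => h2 h'⟩

lemma sum_cons {A : Type} [Fintype A] {n : ℕ} (h : (Fin (n+1) → A) → ℝ) :
    ∑ y, h y = ∑ a, ∑ x : Fin n → A, h (Fin.cons a x) := by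
  rw [← Fintype.sum_prod_type']
  exact (Fintype.sum_equiv (Fin.consEquiv (fun _ => A)) _ _ (fun p => rfl)).symm

lemma wcost_mix {A : Type} [Fintype A] {n : ℕ} (g : (Fin (n+1) → A) → ℝ) (a : A) (x : Fin n → A)
    (σ : (Fin n → A) → A) (ν1 ν2 : (Fin n → A) → ℝ) (h1 : ν1 ∈ stdSimplex ℝ (Fin n → A))
    (h2 : ν2 ∈ stdSimplex ℝ (Fin n → A)) (s : ℝ) (hs0 : 0 ≤ s) (hs1 : s ≤ 1) :
    ∃ ν ∈ stdSimplex ℝ (Fin (n+1) → A), wcost g (Fin.cons a x) ν ≤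
      (1 - s) * wcost (fun y => g (Fin.cons a y)) x ν1
      + s * wcost (fun y => g (Fin.cons (σ y) y)) x ν2 + s ^ 2 / 8 := by
  let ν : (Fin (n+1) → A) → ℝ := fun y =>
    (1 - s) * (if y 0 = a then ν1 (Fin.tail y) else 0)
      + s * (if y 0 = σ (Fin.tail y) then ν2 (Fin.tail y) else 0)
  have key : ∀ φ : (Fin (n+1) → A) → ℝ, ∑ y, ν y * φ y =
      (1 - s) * ∑ y, ν1 y * φ (Fin.cons a y) + s * ∑ y, ν2 y * φ (Fin.cons (σ y) y) := by
    intro φ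
    rw [sum_cons, Finset.sum_comm, Finset.mul_sum, Finset.mul_sum, ← Finset.sum_add_distrib]
    refine Finset.sum_congr rfl fun y _ => ?_
    simp only [ν, Fin.cons_zero, Fin.tail_cons, add_mul, Finset.sum_add_distrib]
    congr 1
    · simp [mul_assoc, ite_mul]
    · simp [mul_assoc, ite_mul]
  have hν : ν ∈ stdSimplex ℝ (Fin (n+1) → A) := by
    refine ⟨fun y => ?_, ?_⟩
    · have := h1.1 (Fin.tail y)
      have := h2.1 (Fin.tail y)
      have : 0 ≤ 1 - s := by linarith
      simp only [ν]
      split_ifs <;> positivity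
    · have := key (fun _ => 1)
      simp only [mul_one] at this
      rw [this, h1.2, h2.2]; ring
  refine ⟨ν, hν, ?_⟩
  have kite : ∀ (i : Fin (n+1)) , (∑ y, if y i ≠ (Fin.cons a x : Fin (n+1) → A) i then ν y else 0) =
      ∑ y, ν y * (if y i ≠ (Fin.cons a x : Fin (n+1) → A) i then 1 else 0) := by
    intro i; simp only [mul_ite, mul_one, mul_zero]
  unfold wcost
  simp only [kite, key, Fin.sum_univ_succ, Fin.cons_zero, Fin.cons_succ]
  simp only [mul_ite, mul_one, mul_zero]
  have hz : (1 - s) * (∑ y : Fin n → A, if a ≠ a then ν1 y else 0) +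
      s * (∑ y, if σ y ≠ a then ν2 y else 0) ≤ s := by
    have : (∑ y, if σ y ≠ a then ν2 y else 0) ≤ 1 := by
      rw [← h2.2]
      refine Finset.sum_le_sum fun y _ => ?_
      have := h2.1 y
      split_ifs <;> linarith
    simp only [ne_eq, not_true_eq_false, if_false, Finset.sum_const_zero, mul_zero, zero_add]
    nlinarith
  have hz0 : 0 ≤ (1 - s) * (∑ y : Fin n → A, if a ≠ a then ν1 y else 0) +
      s * (∑ y, if σ y ≠ a then ν2 y else 0) := by
    simp only [ne_eq, not_true_eq_false, if_false, Finset.sum_const_zero, mul_zero, zero_add]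
    refine mul_nonneg hs0 (Finset.sum_nonneg fun y _ => ?_)
    have := h2.1 y
    split_ifs <;> linarith
  have hz2 := pow_le_pow_left₀ hz0 hz 2
  have hrest : ∑ i : Fin n, ((1 - s) * (∑ y : Fin n → A, if y i ≠ x i then ν1 y else 0) +
      s * (∑ y : Fin n → A, if y i ≠ x i then ν2 y else 0)) ^ 2 ≤
      (1 - s) * ∑ i : Fin n, (∑ y : Fin n → A, if y i ≠ x i then ν1 y else 0) ^ 2 +
      s * ∑ i : Fin n, (∑ y : Fin n → A, if y i ≠ x i then ν2 y else 0) ^ 2 := by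
    rw [Finset.mul_sum, Finset.mul_sum, ← Finset.sum_add_distrib]
    refine Finset.sum_le_sum fun i _ => ?_
    generalize (∑ y : Fin n → A, if y i ≠ x i then ν1 y else 0) = p
    generalize (∑ y : Fin n → A, if y i ≠ x i then ν2 y else 0) = q
    nlinarith [mul_nonneg (mul_nonneg hs0 (sub_nonneg.2 hs1)) (sq_nonneg (p - q))]
  linarith

theorem finite_talagrand {A : Type} [Fintype A] [Nonempty A] (n : ℕ) :
    ∀ f g : (Fin n → A) → ℝ,
      (∀ x, ∀ ν ∈ stdSimplex ℝ (Fin n → A), f x ≤ wcost g x ν) →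
      (∑ x, Real.exp (f x)) * (∑ x, Real.exp (-g x)) ≤ ((Fintype.card A : ℝ) ^ n) ^ 2 := by
  induction n with
  | zero =>
    intro f g h
    have := h default _ (single_mem_stdSimplex ℝ default)
    simp [wcost] at this
    simp only [Finset.univ_unique, Finset.sum_singleton, ← Real.exp_add, pow_zero, one_pow]
    rw [Real.exp_le_one_iff]
    linarith
  | succ n ih =>
    intro f g h
    have hσ : ∀ y : Fin n → A, ∃ a, ∀ a', g (Fin.cons a y) ≤ g (Fin.cons a' y) := fun y =>
      Finite.exists_min (fun a => g (Fin.cons a y))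
    choose σ hσ using hσ
    choose m hm hmin using fun (g : (Fin n → A) → ℝ) (x : Fin n → A) => wcost_min g x
    let G : (Fin n → A) → ℝ := fun y => g (Fin.cons (σ y) y)
    set V := ∑ x, Real.exp (-G x) with hVdef
    set M : ℝ := (Fintype.card A : ℝ) with hM
    set K : ℝ := (M ^ n) ^ 2 with hK
    have hMpos : 0 < M := by rw [hM]; exact_mod_cast Fintype.card_pos
    have hKpos : 0 < K := by positivity
    let U : A → ℝ := fun a => ∑ x : Fin n → A, Real.exp (-g (Fin.cons a x))
    have hUpos : ∀ a, 0 < U a := fun a =>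
      Finset.sum_pos (fun x _ => Real.exp_pos _) Finset.univ_nonempty
    have hVpos : 0 < V := Finset.sum_pos (fun x _ => Real.exp_pos _) Finset.univ_nonempty
    have hstep : ∀ a, ∑ x : Fin n → A, Real.exp (f (Fin.cons a x)) ≤ K / V * (2 - U a / V) := by
      intro a
      refine aux_step _ (fun x => wcost (fun y => g (Fin.cons a y)) x (m _ x))
        (fun x => wcost G x (m _ x)) (U a) V K (hUpos a) ?_ hKpos
        (ih _ _ fun x ν hν => hmin _ x ν hν) (ih _ _ fun x ν hν => hmin _ x ν hν) ?_
      · exact Finset.sum_le_sum fun x _ => Real.exp_le_exp.2 (neg_le_neg (hσ x a))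
      · intro s hs0 hs1 x
        obtain ⟨ν, hν, hle⟩ := wcost_mix g a x σ _ _ (hm (fun y => g (Fin.cons a y)) x) (hm G x) s hs0 hs1
        exact (h _ ν hν).trans hle
    rw [sum_cons, sum_cons (fun y => Real.exp (-g y))]
    change _ * ∑ a, U a ≤ _
    have htot : ∑ a, ∑ x : Fin n → A, Real.exp (f (Fin.cons a x)) ≤
        K / V * (2 * M - (∑ a, U a) / V) := by
      refine (Finset.sum_le_sum fun a _ => hstep a).trans (le_of_eq ?_)
      rw [← Finset.mul_sum, Finset.sum_sub_distrib, ← Finset.sum_div]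
      simp [hM, mul_comm]
    have hU0 : 0 ≤ ∑ a, U a := Finset.sum_nonneg fun a _ => (hUpos a).le
    calc _ ≤ K / V * (2 * M - (∑ a, U a) / V) * ∑ a, U a := mul_le_mul_of_nonneg_right htot hU0
      _ = K * (2 * M * ((∑ a, U a) / V) - ((∑ a, U a) / V) ^ 2) := by field_simp
      _ ≤ K * M ^ 2 := by
        apply mul_le_mul_of_nonneg_left _ hKpos.le
        nlinarith [sq_nonneg (M - (∑ a, U a) / V)]
      _ = _ := by rw [hK]; ring

lemma finite_cert {A : Type} [Fintype A] [Nonempty A] (n : ℕ) (Y : (Fin n → A) → ℝ) (r l : ℝ)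
    (hl : 0 ≤ l)
    (hcert : ∀ x, ∃ b : Fin n → ℝ, (∀ i, 0 ≤ b i) ∧ (∑ i, (b i) ^ 2 ≤ r * Y x) ∧
      ∀ y, Y x - ∑ i ∈ Finset.univ.filter (fun i => x i ≠ y i), b i ≤ Y y) :
    (∑ x, Real.exp ((l - 2 * l ^ 2 * r) * Y x)) * (∑ x, Real.exp (-(l * Y x))) ≤
      ((Fintype.card A : ℝ) ^ n) ^ 2 := by
  refine finite_talagrand n _ _ fun x ν hν => ?_
  obtain ⟨b, hb0, hb1, hb2⟩ := hcert x
  unfold wcost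
  set p : Fin n → ℝ := fun i => ∑ y, if y i ≠ x i then ν y else 0 with hp
  have h1 : l * Y x - l * ∑ i, b i * p i ≤ ∑ y, ν y * (l * Y y) := by
    have e : l * Y x - l * ∑ i, b i * p i =
        ∑ y, ν y * (l * (Y x - ∑ i ∈ Finset.univ.filter (fun i => x i ≠ y i), b i)) := by
      have e1 : ∀ y, ν y * (l * (Y x - ∑ i ∈ Finset.univ.filter (fun i => x i ≠ y i), b i)) =
          ν y * (l * Y x) - l * ∑ i, (if y i ≠ x i then ν y else 0) * b i := by
        intro y
        rw [Finset.sum_filter]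
        have : ∑ i, (if y i ≠ x i then ν y else 0) * b i = ν y * ∑ i, if x i ≠ y i then b i else 0 := by
          rw [Finset.mul_sum]
          refine Finset.sum_congr rfl fun i _ => ?_
          by_cases h : x i = y i
          · simp [h]
          · have h' : ¬ y i = x i := fun h' => h h'.symm
            simp [h, h']
        rw [this]; ring
      simp only [e1]
      rw [Finset.sum_sub_distrib, ← Finset.sum_mul, hν.2, one_mul, ← Finset.mul_sum, Finset.sum_comm]
      congr 2
      refine Finset.sum_congr rfl fun i _ => ?_
      rw [← Finset.sum_mul, mul_comm]
    rw [e]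
    refine Finset.sum_le_sum fun y _ => ?_
    exact mul_le_mul_of_nonneg_left (mul_le_mul_of_nonneg_left (hb2 y) hl) (hν.1 y)
  have h2 : l * ∑ i, b i * p i ≤ (∑ i, p i ^ 2) / 8 + 2 * l ^ 2 * ∑ i, b i ^ 2 := by
    rw [Finset.mul_sum, Finset.mul_sum, Finset.sum_div, ← Finset.sum_add_distrib]
    refine Finset.sum_le_sum fun i _ => ?_
    nlinarith [sq_nonneg (p i - 4 * l * b i)]
  have h3 : 2 * l ^ 2 * ∑ i, b i ^ 2 ≤ 2 * l ^ 2 * (r * Y x) :=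
    mul_le_mul_of_nonneg_left hb1 (by positivity)
  nlinarith

lemma pi_reindex {ι κ : Type} [Fintype ι] [Fintype κ] (Ω : ι → Type) [∀ i, MeasurableSpace (Ω i)]
    (μ : ∀ i, Measure (Ω i)) [∀ i, IsProbabilityMeasure (μ i)] (e : κ → ι)
    (he : Function.Injective e) :
    MeasurePreserving (fun (s : ∀ i, Ω i) (q : κ) => s (e q)) (Measure.pi μ)
      (Measure.pi fun q => μ (e q)) := by
  have hmeas : Measurable (fun (s : ∀ i, Ω i) (q : κ) => s (e q)) :=
    measurable_pi_lambda _ fun q => measurable_pi_apply _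
  refine ⟨hmeas, ?_⟩
  refine (Measure.pi_eq fun t ht => ?_).symm
  rw [Measure.map_apply hmeas (MeasurableSet.univ_pi ht)]
  let T : ∀ i, Set (Ω i) := fun i => {w | ∀ q (h : e q = i), w ∈ h ▸ t q}
  have hT : ∀ q, T (e q) = t q := by
    intro q
    ext w
    constructor
    · intro h
      exact h q rfl
    · intro h q' h'
      obtain rfl := he h'
      exact h
  have hpre : (fun (s : ∀ i, Ω i) (q : κ) => s (e q)) ⁻¹' (Set.univ.pi t) = Set.univ.pi T := by
    ext s
    simp only [Set.mem_preimage, Set.mem_univ_pi]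
    constructor
    · rintro h i q rfl
      exact h q
    · intro h q
      exact h (e q) q rfl
  rw [hpre, Measure.pi_pi]
  symm
  rw [← Finset.prod_subset (Finset.subset_univ (Finset.univ.image e))]
  · rw [Finset.prod_image (fun a _ b _ h => he h)]
    exact Finset.prod_congr rfl fun q _ => by rw [hT]
  · intro i _ hi
    have : T i = Set.univ := by
      ext w
      simp only [Set.mem_univ, iff_true]
      intro q h
      exact absurd (Finset.mem_image.2 ⟨q, Finset.mem_univ _, h⟩) hi
    rw [this, measure_univ]

lemma sample_indep {n N : ℕ} (Ω : Fin n → Type) [∀ i, MeasurableSpace (Ω i)]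
    (μ : ∀ i, Measure (Ω i)) [∀ i, IsProbabilityMeasure (μ i)] (j k : Fin n → Fin N)
    (hjk : ∀ i, j i ≠ k i) (F G : (∀ i, Ω i) → ENNReal) (hF : Measurable F) (hG : Measurable G) :
    ∫⁻ s : (∀ p : Fin n × Fin N, Ω p.1), F (fun i => s (i, j i)) * G (fun i => s (i, k i))
      ∂(Measure.pi fun p : Fin n × Fin N => μ p.1) =
    (∫⁻ x, F x ∂(Measure.pi μ)) * ∫⁻ x, G x ∂(Measure.pi μ) := by
  let e : Fin n ⊕ Fin n → Fin n × Fin N := Sum.elim (fun i => (i, j i)) (fun i => (i, k i))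
  have he : Function.Injective e := by
    rintro (a | a) (b | b) h <;> simp only [e, Sum.elim_inl, Sum.elim_inr, Prod.mk.injEq] at h
    · rw [h.1]
    · obtain ⟨rfl, h⟩ := h
      exact absurd h (hjk _)
    · obtain ⟨rfl, h⟩ := h
      exact absurd h.symm (hjk _)
    · rw [h.1]
  have h1 := pi_reindex (fun p : Fin n × Fin N => Ω p.1) (fun p => μ p.1) e he
  have h2 := measurePreserving_sumPiEquivProdPi (X := fun q => Ω (e q).1) (fun q => μ (e q).1)
  have h3 := h2.comp h1
  rw [← lintegral_prod_mul (μ := Measure.pi μ) (ν := Measure.pi μ) hF.aemeasurable hG.aemeasurable]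
  exact h3.lintegral_comp (f := fun z : (∀ i, Ω i) × (∀ i, Ω i) => F z.1 * G z.2)
    ((hF.comp measurable_fst).mul (hG.comp measurable_snd))

lemma sample_bound {n : ℕ} (Ω : Fin n → Type) [∀ i, MeasurableSpace (Ω i)]
    (μ : ∀ i, Measure (Ω i)) [∀ i, IsProbabilityMeasure (μ i)]
    (F G : (∀ i, Ω i) → ENNReal) (hF : Measurable F) (hG : Measurable G) (N : ℕ)
    (h : ∀ s : (∀ p : Fin n × Fin (N+1), Ω p.1),
      (∑ j : Fin n → Fin (N+1), F (fun i => s (i, j i))) * (∑ j : Fin n → Fin (N+1), G (fun i => s (i, j i)))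
        ≤ (((N+1 : ℕ) : ENNReal) ^ n) ^ 2) :
    (((N+1 : ℕ) : ENNReal) ^ n) * ((N : ENNReal) ^ n) * 
      ((∫⁻ x, F x ∂(Measure.pi μ)) * ∫⁻ x, G x ∂(Measure.pi μ)) ≤ (((N+1 : ℕ) : ENNReal) ^ n) ^ 2 := by
  set I := ((∫⁻ x, F x ∂(Measure.pi μ)) * ∫⁻ x, G x ∂(Measure.pi μ)) with hI
  set ρ := (Measure.pi fun p : Fin n × Fin (N+1) => μ p.1) with hρ
  have hmj : ∀ j : Fin n → Fin (N+1),
      Measurable (fun (s : ∀ p : Fin n × Fin (N+1), Ω p.1) i => s (i, j i)) := fun j =>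
    measurable_pi_lambda _ fun i => measurable_pi_apply _
  have hmm : ∀ j k : Fin n → Fin (N+1), Measurable
      (fun s : (∀ p : Fin n × Fin (N+1), Ω p.1) => F (fun i => s (i, j i)) * G (fun i => s (i, k i))) :=
    fun j k => (hF.comp (hmj j)).mul (hG.comp (hmj k))
  have h1 : ∫⁻ s, (∑ j : Fin n → Fin (N+1), F (fun i => s (i, j i))) *
      (∑ j : Fin n → Fin (N+1), G (fun i => s (i, j i))) ∂ρ ≤ (((N+1 : ℕ) : ENNReal) ^ n) ^ 2 := by
    refine (lintegral_mono h).trans ?_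
    rw [lintegral_const, measure_univ, mul_one]
  refine le_trans ?_ h1
  simp_rw [Finset.sum_mul_sum]
  rw [lintegral_finsetSum _ (fun j _ => Finset.measurable_sum _ fun k _ => hmm j k)]
  have h2 : ∀ j : Fin n → Fin (N+1), (N : ENNReal) ^ n * I ≤
      ∫⁻ s, ∑ k : Fin n → Fin (N+1), F (fun i => s (i, j i)) * G (fun i => s (i, k i)) ∂ρ := by
    intro j
    rw [lintegral_finsetSum _ (fun k _ => hmm j k)]
    calc (N : ENNReal) ^ n * I = ∑ k ∈ Fintype.piFinset (fun i => ({j i}ᶜ : Finset (Fin (N+1)))), I := by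
          rw [Finset.sum_const, Fintype.card_piFinset]
          simp [Finset.card_compl]
      _ = ∑ k ∈ Fintype.piFinset (fun i => ({j i}ᶜ : Finset (Fin (N+1)))),
          ∫⁻ s, F (fun i => s (i, j i)) * G (fun i => s (i, k i)) ∂ρ := by
          refine Finset.sum_congr rfl fun k hk => ?_
          rw [sample_indep Ω μ j k (fun i h => ?_) F G hF hG]
          have := Fintype.mem_piFinset.1 hk i
          simp [h] at this
      _ ≤ _ := Finset.sum_le_sum_of_subset (Finset.subset_univ _)
  calc _ = ∑ j : Fin n → Fin (N+1), (N : ENNReal) ^ n * I := by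
        rw [Finset.sum_const, Finset.card_univ]
        simp [mul_assoc]
    _ ≤ _ := Finset.sum_le_sum fun j _ => h2 j

lemma le_one_of_bounds (n : ℕ) (I : ENNReal)
    (h : ∀ N : ℕ, (((N+1 : ℕ) : ENNReal) ^ n) * ((N : ENNReal) ^ n) * I
      ≤ (((N+1 : ℕ) : ENNReal) ^ n) ^ 2) : I ≤ 1 := by
  have hfin : I ≠ ⊤ := by
    rintro rfl
    have := h 1
    rw [ENNReal.mul_top (by simp)] at this
    simp at this
  lift I to NNReal using hfin
  have h' : ∀ N : ℕ, ((N : ℝ) / (N + 1)) ^ n * I ≤ 1 := by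
    intro N
    have h0 : ((N+1 : ℕ) : NNReal) ^ n * (N : NNReal) ^ n * I ≤ (((N+1 : ℕ) : NNReal) ^ n) ^ 2 := by
      exact_mod_cast h N
    have h1 : ((N:ℝ)+1) ^ n * (N : ℝ) ^ n * I ≤ (((N:ℝ)+1) ^ n) ^ 2 := by
      exact_mod_cast h0
    have hp : (0:ℝ) < ((N:ℝ)+1) ^ n := by positivity
    rw [div_pow, div_mul_eq_mul_div, div_le_one hp]
    nlinarith
  have ht : Filter.Tendsto (fun N : ℕ => ((N : ℝ) / (N + 1)) ^ n * (I : ℝ)) Filter.atTop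
      (nhds (1 ^ n * (I : ℝ))) :=
    ((tendsto_natCast_div_add_atTop (1:ℝ)).pow n).mul_const _
  have := le_of_tendsto' ht h'
  simp only [one_pow, one_mul] at this
  exact_mod_cast this

lemma exp_moment {n : ℕ} (Ω : Fin n → Type) [∀ i, MeasurableSpace (Ω i)]
    (μ : ∀ i, Measure (Ω i)) [∀ i, IsProbabilityMeasure (μ i)]
    (X : (∀ i, Ω i) → ℝ) (hXmeas : Measurable X) (r l : ℝ) (hl : 0 ≤ l)
    (hcert : ∀ x : ∀ i, Ω i, ∃ b : Fin n → ℝ, (∀ i, 0 ≤ b i) ∧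
      (∑ i, (b i) ^ 2 ≤ r * X x) ∧
      ∀ y : ∀ i, Ω i,
        X x - ∑ i ∈ Finset.univ.filter (fun i => x i ≠ y i), b i ≤ X y) :
    (∫⁻ x, ENNReal.ofReal (Real.exp ((l - 2 * l ^ 2 * r) * X x)) ∂(Measure.pi μ)) *
      (∫⁻ x, ENNReal.ofReal (Real.exp (-(l * X x))) ∂(Measure.pi μ)) ≤ 1 := by
  refine le_one_of_bounds n _ fun N => ?_
  refine sample_bound Ω μ _ _ (by fun_prop) (by fun_prop) N fun s => ?_
  have := finite_cert (A := Fin (N+1)) n (fun j => X (fun i => s (i, j i))) r l hl ?_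
  · rw [← ENNReal.ofReal_sum_of_nonneg (fun _ _ => (Real.exp_pos _).le),
      ← ENNReal.ofReal_sum_of_nonneg (fun _ _ => (Real.exp_pos _).le),
      ← ENNReal.ofReal_mul (Finset.sum_nonneg fun _ _ => (Real.exp_pos _).le)]
    refine (ENNReal.ofReal_le_ofReal this).trans (le_of_eq ?_)
    rw [Fintype.card_fin, ENNReal.ofReal_pow (by positivity), ENNReal.ofReal_pow (by positivity),
      ENNReal.ofReal_natCast]
  · intro j
    obtain ⟨b, hb0, hb1, hb2⟩ := hcert (fun i => s (i, j i))
    refine ⟨b, hb0, hb1, fun k => le_trans ?_ (hb2 (fun i => s (i, k i)))⟩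
    refine sub_le_sub_left (Finset.sum_le_sum_of_subset_of_nonneg ?_ fun i _ _ => hb0 i) _
    intro i hi
    simp only [Finset.mem_filter, Finset.mem_univ, true_and] at hi ⊢
    intro h
    exact hi (by rw [h])

lemma tails {n : ℕ} (Ω : Fin n → Type) [∀ i, MeasurableSpace (Ω i)]
    (μ : ∀ i, Measure (Ω i)) [∀ i, IsProbabilityMeasure (μ i)]
    (X : (∀ i, Ω i) → ℝ) (hXmeas : Measurable X) (hX0 : ∀ x, 0 ≤ X x) (r : ℝ) (hr : 0 < r)
    (hcert : ∀ x : ∀ i, Ω i, ∃ b : Fin n → ℝ, (∀ i, 0 ≤ b i) ∧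
      (∑ i, (b i) ^ 2 ≤ r * X x) ∧
      ∀ y : ∀ i, Ω i,
        X x - ∑ i ∈ Finset.univ.filter (fun i => x i ≠ y i), b i ≤ X y) (t : ℝ) (ht : 0 < t) :
    (Measure.pi μ).real {x | |X x - ∫ x, X x ∂(Measure.pi μ)| > t} ≤
      2 * Real.exp (-t ^ 2 / (8 * r * ((∫ x, X x ∂(Measure.pi μ)) + t))) := by
  set P := Measure.pi μ with hP
  set E := ∫ x, X x ∂P with hE
  have hE0 : 0 ≤ E := integral_nonneg hX0
  have hint2 : ∀ l, 0 ≤ l → Integrable (fun x => Real.exp (-(l * X x))) P := by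
    intro l hl
    refine Integrable.of_bound (C := 1) (by fun_prop) (Filter.Eventually.of_forall fun x => ?_)
    rw [Real.norm_eq_abs, abs_of_pos (Real.exp_pos _), Real.exp_le_one_iff]
    have := mul_nonneg hl (hX0 x)
    linarith
  have hpos2 : ∀ l, 0 ≤ l → 0 < ∫ x, Real.exp (-(l * X x)) ∂P := fun l hl =>
    integral_exp_pos (hint2 l hl)
  have hlin : ∀ l, 0 ≤ l → ∫⁻ x, ENNReal.ofReal (Real.exp (-(l * X x))) ∂P =
      ENNReal.ofReal (∫ x, Real.exp (-(l * X x)) ∂P) := fun l hl =>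
    (ofReal_integral_eq_lintegral_ofReal (hint2 l hl)
      (Filter.Eventually.of_forall fun x => (Real.exp_pos _).le)).symm
  have hint1 : ∀ l, 0 ≤ l → Integrable (fun x => Real.exp ((l - 2 * l ^ 2 * r) * X x)) P := by
    intro l hl
    refine ⟨by fun_prop, ?_⟩
    rw [hasFiniteIntegral_iff_ofReal (Filter.Eventually.of_forall fun x => (Real.exp_pos _).le)]
    have h := exp_moment Ω μ X hXmeas r l hl hcert
    rw [← hP, hlin l hl] at h
    by_contra hc
    rw [not_lt, top_le_iff] at hc
    rw [hc, ENNReal.top_mul (by simpa using hpos2 l hl)] at h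
    simp at h
  have hprod : ∀ l, 0 ≤ l → (∫ x, Real.exp ((l - 2 * l ^ 2 * r) * X x) ∂P) *
      (∫ x, Real.exp (-(l * X x)) ∂P) ≤ 1 := by
    intro l hl
    have h := exp_moment Ω μ X hXmeas r l hl hcert
    rw [← hP, hlin l hl, ← ofReal_integral_eq_lintegral_ofReal (hint1 l hl)
      (Filter.Eventually.of_forall fun x => (Real.exp_pos _).le),
      ← ENNReal.ofReal_mul (integral_nonneg fun x => (Real.exp_pos _).le)] at h
    exact ENNReal.ofReal_le_one.1 h
  have hXint : Integrable X P := by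
    have h := hint1 (1 / (4 * r)) (by positivity)
    have e : 1 / (4 * r) - 2 * (1 / (4 * r)) ^ 2 * r = 1 / (8 * r) := by field_simp; norm_num
    rw [e] at h
    refine (h.const_mul (8 * r)).mono' (by fun_prop) (Filter.Eventually.of_forall fun x => ?_)
    rw [Real.norm_eq_abs, abs_of_nonneg (hX0 x)]
    have := Real.add_one_le_exp (1 / (8 * r) * X x)
    calc X x = 8 * r * (1 / (8 * r) * X x) := by field_simp
      _ ≤ _ := mul_le_mul_of_nonneg_left (by linarith) (by positivity)
  have hjensen : ∀ c : ℝ, Integrable (fun x => Real.exp (c * X x)) P →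
      Real.exp (c * E) ≤ ∫ x, Real.exp (c * X x) ∂P := by
    intro c hc
    have hd : Integrable (fun x => c * (X x - E)) P := (hXint.sub (integrable_const E)).const_mul c
    have hi : Integrable (fun x => Real.exp (c * E) * (1 + c * (X x - E))) P :=
      ((integrable_const (1:ℝ)).add hd).const_mul _
    have h1 : ∫ x, Real.exp (c * E) * (1 + c * (X x - E)) ∂P = Real.exp (c * E) := by
      rw [integral_const_mul, integral_add (integrable_const _) hd, integral_const_mul,
        integral_sub hXint (integrable_const E)]
      simp [← hE]
    rw [← h1]
    refine integral_mono hi hc fun x => ?_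
    have := Real.add_one_le_exp (c * (X x - E))
    calc Real.exp (c * E) * (1 + c * (X x - E)) ≤ Real.exp (c * E) * Real.exp (c * (X x - E)) :=
          mul_le_mul_of_nonneg_left (by linarith) (Real.exp_pos _).le
      _ = Real.exp (c * X x) := by rw [← Real.exp_add]; congr 1; ring
  set l := t / (4 * r * (E + t)) with hl
  have hEt : 0 < E + t := by linarith
  have hl0 : 0 < l := by positivity
  have hlr : l * (4 * r * (E + t)) = t := by rw [hl]; field_simp
  have hlr2 : 4 * l * r ≤ 1 := by
    by_contra hc
    push Not at hc
    nlinarith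
  set c := l - 2 * l ^ 2 * r with hc
  have hc0 : 0 < c := by rw [hc]; nlinarith
  have hexp : -t ^ 2 / (8 * r * (E + t)) = -(l * t) + 2 * l ^ 2 * r * (E + t) := by
    rw [hl]; field_simp; ring
  have hb := hprod l hl0.le
  have hI1 := hint1 l hl0.le
  have hI2 := hint2 l hl0.le
  rw [← hc] at hb hI1
  have hj1 := hjensen c hI1
  have hj2 := hjensen (-l) (by simpa only [neg_mul] using hI2)
  simp only [neg_mul] at hj2
  have hup : P.real {x | E + t ≤ X x} ≤ Real.exp (-t ^ 2 / (8 * r * (E + t))) := by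
    have hm := mul_meas_ge_le_integral_of_nonneg (μ := P)
      (Filter.Eventually.of_forall fun x => (Real.exp_pos (c * X x)).le) hI1 (Real.exp (c * (E + t)))
    have hs : {x | E + t ≤ X x} ⊆ {x | Real.exp (c * (E + t)) ≤ Real.exp (c * X x)} := fun x hx =>
      Real.exp_le_exp.2 (mul_le_mul_of_nonneg_left hx hc0.le)
    have hs' := measureReal_mono (μ := P) hs
    set A := ∫ x, Real.exp (c * X x) ∂P
    have hA : A ≤ Real.exp (l * E) := by
      have : A * Real.exp (-(l * E)) ≤ 1 :=
        (mul_le_mul_of_nonneg_left hj2 ((Real.exp_pos _).le.trans hj1)).trans hb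
      rw [Real.exp_neg, ← div_eq_mul_inv, div_le_one (Real.exp_pos _)] at this
      exact this
    have : P.real {x | E + t ≤ X x} ≤ Real.exp (l * E) / Real.exp (c * (E + t)) := by
      rw [le_div_iff₀ (Real.exp_pos _)]
      nlinarith [mul_le_mul_of_nonneg_left hs' (Real.exp_pos (c * (E + t))).le]
    rw [← Real.exp_sub] at this
    refine this.trans (Real.exp_le_exp.2 (le_of_eq ?_))
    rw [hexp, hc]; ring
  have hlow : P.real {x | X x ≤ E - t} ≤ Real.exp (-t ^ 2 / (8 * r * (E + t))) := by
    have hm := mul_meas_ge_le_integral_of_nonneg (μ := P)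
      (Filter.Eventually.of_forall fun x => (Real.exp_pos (-(l * X x))).le) hI2
        (Real.exp (-(l * (E - t))))
    have hs : {x | X x ≤ E - t} ⊆ {x | Real.exp (-(l * (E - t))) ≤ Real.exp (-(l * X x))} :=
      fun x hx => Real.exp_le_exp.2 (neg_le_neg (mul_le_mul_of_nonneg_left hx hl0.le))
    have hs' := measureReal_mono (μ := P) hs
    set B := ∫ x, Real.exp (-(l * X x)) ∂P
    have hB0 : 0 ≤ B := (Real.exp_pos _).le.trans hj2
    have hB : B ≤ Real.exp (-(c * E)) := by
      have : Real.exp (c * E) * B ≤ 1 := (mul_le_mul_of_nonneg_right hj1 hB0).trans hb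
      rw [Real.exp_neg, le_inv_comm₀ (hpos2 l hl0.le) (Real.exp_pos _), ← one_div,
        le_div_iff₀ (hpos2 l hl0.le)]
      exact this
    have : P.real {x | X x ≤ E - t} ≤ Real.exp (-(c * E)) / Real.exp (-(l * (E - t))) := by
      rw [le_div_iff₀ (Real.exp_pos _)]
      nlinarith [mul_le_mul_of_nonneg_left hs' (Real.exp_pos (-(l * (E - t)))).le]
    rw [← Real.exp_sub] at this
    refine this.trans (Real.exp_le_exp.2 ?_)
    rw [hexp, hc]
    have : 0 ≤ 2 * l ^ 2 * r * t := by positivity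
    linarith
  have hsub : {x | |X x - E| > t} ⊆ {x | E + t ≤ X x} ∪ {x | X x ≤ E - t} := by
    intro x hx
    rcases lt_abs.1 (show t < |X x - E| from hx) with h | h
    · left; show E + t ≤ X x; linarith
    · right; show X x ≤ E - t; linarith
  have := measureReal_mono (μ := P) hsub
  have := measureReal_union_le (μ := P) {x | E + t ≤ X x} {x | X x ≤ E - t}
  linarith

theorem stmt_10 {n : ℕ} (Ω : Fin n → Type) [∀ i, MeasureSpace (Ω i)]
    [∀ i, IsProbabilityMeasure (volume : Measure (Ω i))]
    (X : (∀ i, Ω i) → ℝ) (hXmeas : Measurable X) (hX0 : ∀ x, 0 ≤ X x)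
    (hXne : X ≠ 0)
    (r : ℝ) (hr : 0 < r)
    (Ωstar : Set (∀ i, Ω i)) (hΩstar : MeasurableSet Ωstar)
    (hcert : ∀ x : ∀ i, Ω i, ∃ b : Fin n → ℝ, (∀ i, 0 ≤ b i) ∧
      (∑ i, (b i) ^ 2 ≤ r * X x) ∧
      ∀ y : ∀ i, Ω i,
        X x - ∑ i ∈ Finset.univ.filter (fun i => x i ≠ y i), b i ≤ X y) :
    ∀ t : ℝ,
      96 * r * Real.sqrt (∫ x, X x ∂(prodMeasure Ω)) + 128 * Real.sqrt r +
          8 * essSup X (prodMeasure Ω) * ((prodMeasure Ω) Ωstar).toReal < t →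
      ((prodMeasure Ω) {x | |X x - ∫ x, X x ∂(prodMeasure Ω)| > t}).toReal ≤
        4 * Real.exp (-t ^ 2 / (8 * r * ((∫ x, X x ∂(prodMeasure Ω)) + t))) +
          4 * ((prodMeasure Ω) Ωstar).toReal := by
  intro t ht
  have hP : IsProbabilityMeasure (prodMeasure Ω) := by
    unfold prodMeasure; infer_instance
  have hess : 0 ≤ essSup X (prodMeasure Ω) := by
    unfold essSup
    rw [Filter.limsup_eq]
    refine Real.sInf_nonneg fun a ha => ?_
    obtain ⟨x, hx⟩ := (show ∀ᵐ x ∂(prodMeasure Ω), X x ≤ a from ha).exists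
    exact (hX0 x).trans hx
  have ht0 : 0 < t := by
    refine lt_of_lt_of_le' ht ?_
    positivity
  have h := tails Ω (fun i => (volume : Measure (Ω i))) X hXmeas hX0 r hr hcert t ht0
  change ((prodMeasure Ω) {x | |X x - ∫ x, X x ∂(prodMeasure Ω)| > t}).toReal ≤
    2 * Real.exp (-t ^ 2 / (8 * r * ((∫ x, X x ∂(prodMeasure Ω)) + t))) at h
  have h1 := Real.exp_pos (-t ^ 2 / (8 * r * ((∫ x, X x ∂(prodMeasure Ω)) + t)))
  have h2 : 0 ≤ ((prodMeasure Ω) Ωstar).toReal := ENNReal.toReal_nonneg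
  linarith
end

section
/- Let B₁, B₂, …, B_n be events in a probability space and suppose D = (V,E) with V = {1,…,n} is a dependency digraph for these events. Suppose there are real numbers x₁,…,x_n with 0 ≤ x_i < 1 and Pr(B_i) ≤ x_i·Π_{(i,j) ∈ E}(1 − x_j) for every i. Then Pr(⋂_{i=1}^n B_i^c) ≥ Π_{i=1}^n (1 − x_i) > 0. -/
open MeasureTheory
open scoped Classical

/-- The event `A` is mutually independent of the family of events `B`: for every two
disjoint finite subsets `S, T` of the index set,
`Pr(A ∩ ⋂_{j ∈ S} B j ∩ ⋂_{j ∈ T} (B j)ᶜ) = Pr(A) · Pr(⋂_{j ∈ S} B j ∩ ⋂_{j ∈ T} (B j)ᶜ)`. -/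
def MutuallyIndepOf {Ω : Type} [MeasurableSpace Ω] (μ : Measure Ω) (A : Set Ω)
    {ι : Type} (B : ι → Set Ω) : Prop :=
  ∀ S T : Finset ι, Disjoint S T →
    μ (A ∩ ((⋂ j ∈ S, B j) ∩ ⋂ j ∈ T, (B j)ᶜ)) =
      μ A * μ ((⋂ j ∈ S, B j) ∩ ⋂ j ∈ T, (B j)ᶜ)

/-- One step: removing an event of conditional probability at most `x a`. -/
lemma lll_step {Ω : Type} [MeasureSpace Ω] [IsProbabilityMeasure (volume : Measure Ω)]
    {n : ℕ} (B : Fin n → Set Ω) (hB : ∀ i, MeasurableSet (B i)) (x : Fin n → ℝ)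
    (T : Finset (Fin n)) (a : Fin n)
    (h : volume.real (B a ∩ ⋂ j ∈ T, (B j)ᶜ) ≤ x a * volume.real (⋂ j ∈ T, (B j)ᶜ)) :
    (1 - x a) * volume.real (⋂ j ∈ T, (B j)ᶜ) ≤ volume.real (⋂ j ∈ insert a T, (B j)ᶜ) := by
  have h1 := measureReal_inter_add_sdiff (μ := volume) (s := ⋂ j ∈ T, (B j)ᶜ) (hB a)
  have h2 : (⋂ j ∈ insert a T, (B j)ᶜ) = (⋂ j ∈ T, (B j)ᶜ) \ B a := by
    rw [Finset.set_biInter_insert, Set.inter_comm, Set.sdiff_eq]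
  rw [Set.inter_comm] at h1
  rw [h2]
  linarith

/-- Iterating the step along a set `U`. -/
lemma lll_chain {Ω : Type} [MeasureSpace Ω] [IsProbabilityMeasure (volume : Measure Ω)]
    {n : ℕ} (B : Fin n → Set Ω) (hB : ∀ i, MeasurableSet (B i)) (x : Fin n → ℝ)
    (hx1 : ∀ i, x i < 1) (S R : Finset (Fin n))
    (H : ∀ T, T ⊂ S → ∀ a,
      volume.real (B a ∩ ⋂ j ∈ T, (B j)ᶜ) ≤ x a * volume.real (⋂ j ∈ T, (B j)ᶜ))
    (U : Finset (Fin n)) :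
    U ∪ R ⊆ S → Disjoint U R →
      (∏ j ∈ U, (1 - x j)) * volume.real (⋂ j ∈ R, (B j)ᶜ)
        ≤ volume.real (⋂ j ∈ U ∪ R, (B j)ᶜ) := by
  induction U using Finset.induction_on with
  | empty => intro _ _; simp
  | insert a U ha ih =>
    intro hS hd
    rw [Finset.disjoint_insert_left] at hd
    rw [Finset.insert_union] at hS ⊢
    have haS : a ∉ U ∪ R := by simp [ha, hd.1]
    have hss : U ∪ R ⊂ S := lt_of_lt_of_le (Finset.ssubset_insert haS) hS
    have h1 := ih hss.1 hd.2
    have h2 := lll_step B hB x (U ∪ R) a (H _ hss a)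
    rw [Finset.prod_insert ha, mul_assoc]
    exact (mul_le_mul_of_nonneg_left h1 (by linarith [hx1 a])).trans h2

lemma lll_main {Ω : Type} [MeasureSpace Ω] [IsProbabilityMeasure (volume : Measure Ω)]
    {n : ℕ} (B : Fin n → Set Ω) (hB : ∀ i, MeasurableSet (B i))
    (Adj : Fin n → Fin n → Prop)
    (hdep : ∀ i : Fin n,
      MutuallyIndepOf volume (B i) (fun j : {j : Fin n // ¬ Adj i j} => B j))
    (x : Fin n → ℝ) (hx0 : ∀ i, 0 ≤ x i) (hx1 : ∀ i, x i < 1)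
    (hxB : ∀ i, (volume (B i)).toReal ≤
      x i * ∏ j ∈ Finset.univ.filter (fun j => Adj i j), (1 - x j))
    (S : Finset (Fin n)) : ∀ i,
      volume.real (B i ∩ ⋂ j ∈ S, (B j)ᶜ) ≤ x i * volume.real (⋂ j ∈ S, (B j)ᶜ) := by
  induction S using Finset.strongInduction with
  | H S IH =>
    intro i
    have hU : S.filter (fun j => Adj i j) ∪ S.filter (fun j => ¬ Adj i j) = S :=
      Finset.filter_union_filter_not_eq _ _
    have hc := lll_chain B hB x hx1 S (S.filter (fun j => ¬ Adj i j)) IH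
      (S.filter (fun j => Adj i j)) hU.subset (Finset.disjoint_filter_filter_not _ _ _)
    rw [hU] at hc
    have hind : volume.real (B i ∩ ⋂ j ∈ S.filter (fun j => ¬ Adj i j), (B j)ᶜ)
        = volume.real (B i) * volume.real (⋂ j ∈ S.filter (fun j => ¬ Adj i j), (B j)ᶜ) := by
      have h := hdep i ∅ (S.subtype (fun j => ¬ Adj i j)) (Finset.disjoint_empty_left _)
      have e : (⋂ j ∈ S.subtype (fun j => ¬ Adj i j), (B (j : Fin n))ᶜ)
          = ⋂ j ∈ S.filter (fun j => ¬ Adj i j), (B j)ᶜ := by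
        ext w
        simp only [Set.mem_iInter, Finset.mem_subtype, Finset.mem_filter, Subtype.forall]
        exact ⟨fun h j hj => h j hj.2 hj.1, fun h j h1 h2 => h j ⟨h2, h1⟩⟩
      simp only [Finset.notMem_empty, Set.iInter_of_empty, Set.iInter_univ, Set.univ_inter] at h
      rw [e] at h
      simp only [Measure.real, h, ENNReal.toReal_mul]
    have hmono : volume.real (B i ∩ ⋂ j ∈ S, (B j)ᶜ)
        ≤ volume.real (B i ∩ ⋂ j ∈ S.filter (fun j => ¬ Adj i j), (B j)ᶜ) :=
      measureReal_mono (Set.inter_subset_inter_right _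
        (Set.biInter_subset_biInter_left (fun j hj => (Finset.mem_filter.1 hj).1)))
    have hprod : ∏ j ∈ Finset.univ.filter (fun j => Adj i j), (1 - x j)
        ≤ ∏ j ∈ S.filter (fun j => Adj i j), (1 - x j) :=
      Finset.prod_le_prod_of_subset_of_le_one
        (Finset.filter_subset_filter _ (Finset.subset_univ _))
        (fun j _ => by linarith [hx1 j]) (fun j _ _ => by linarith [hx0 j])
    have hb : volume.real (B i) ≤ x i * ∏ j ∈ S.filter (fun j => Adj i j), (1 - x j) :=
      (hxB i).trans (mul_le_mul_of_nonneg_left hprod (hx0 i))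
    calc _ ≤ _ := hmono
      _ = _ := hind
      _ ≤ _ := mul_le_mul_of_nonneg_right hb measureReal_nonneg
      _ = _ := mul_assoc _ _ _
      _ ≤ _ := mul_le_mul_of_nonneg_left hc (hx0 i)

theorem stmt_11 {Ω : Type} [MeasureSpace Ω]
    [IsProbabilityMeasure (volume : Measure Ω)]
    (n : ℕ) (B : Fin n → Set Ω) (hB : ∀ i, MeasurableSet (B i))
    (Adj : Fin n → Fin n → Prop)
    -- `Adj` (i.e. the arc set E of the digraph D) is a dependency digraph for the events:
    (hdep : ∀ i : Fin n,
      MutuallyIndepOf volume (B i) (fun j : {j : Fin n // ¬ Adj i j} => B j))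
    (x : Fin n → ℝ) (hx0 : ∀ i, 0 ≤ x i) (hx1 : ∀ i, x i < 1)
    (hxB : ∀ i, (volume (B i)).toReal ≤
      x i * ∏ j ∈ Finset.univ.filter (fun j => Adj i j), (1 - x j)) :
    (∏ i, (1 - x i)) ≤ (volume (⋂ i, (B i)ᶜ)).toReal ∧ 0 < ∏ i, (1 - x i) := by
  refine ⟨?_, Finset.prod_pos fun i _ => by linarith [hx1 i]⟩
  have h := lll_chain B hB x hx1 Finset.univ ∅
    (fun T _ => lll_main B hB Adj hdep x hx0 hx1 hxB T) Finset.univ (by simp) (by simp)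
  simpa [Measure.real] using h
end

section
/- Let X be a non-negative random variable, not identically 0, determined by n independent trials T₁,…,T_n. Let r > 0 and let Ω* be a measurable subset of the product space. Suppose that for every outcome x = (x₁,…,x_n) of the trials there exist non-negative reals b₁,…,b_n such that (1) Σ_i b_i² ≤ r·X(x), and (2) for any outcome y, X(y) ≥ X(x) − Σ_{i : x_i ≠ y_i} b_i. Then for any t > 0 and any median Med(X) of X, Pr(|X − Med(X)| > t) ≤ 4·exp(−t²/(4r·(Med(X) + t))) + 4·Pr(Ω*). -/
open MeasureTheory
open scoped Classical

/-- `m` is a median of the random variable `X`. -/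
def IsMedian {n : ℕ} {Ω : Fin n → Type} [∀ i, MeasureSpace (Ω i)]
    (X : (∀ i, Ω i) → ℝ) (m : ℝ) : Prop :=
  (1 : ℝ) / 2 ≤ ((prodMeasure Ω) {x | X x ≤ m}).toReal ∧
  (1 : ℝ) / 2 ≤ ((prodMeasure Ω) {x | m ≤ X x}).toReal

lemma tal_scalar1 (d : ℝ) (h : 0 ≤ d) (h2 : d ≤ 1/2) :
    Real.exp (d-d^2) + Real.exp (-d) ≤ 2 := by
  have h1 := Real.exp_bound' (x := d-d^2) (by nlinarith) (by nlinarith) (n := 3) (by norm_num)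
  have h4 := Real.quadratic_le_exp_of_nonneg h
  simp [Finset.sum_range_succ, Nat.factorial] at h1
  have h5 : Real.exp (-d) ≤ 1 - d + d^2/2 := by
    rw [Real.exp_neg]
    apply inv_le_of_inv_le₀ (by nlinarith)
    refine le_trans ?_ h4
    rw [inv_le_iff_one_le_mul₀ (by nlinarith)]
    nlinarith [pow_nonneg h 4]
  have : (d-d^2)^3 ≤ d^3 := by
    apply pow_le_pow_left₀ <;> nlinarith
  nlinarith [pow_nonneg h 3, pow_nonneg h 4]

/-- For every `d ≥ 0` there is an optimal `l ∈ [0,1]`. -/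
lemma tal_scalar (d : ℝ) (h : 0 ≤ d) :
    ∃ l : ℝ, 0 ≤ l ∧ l ≤ 1 ∧ Real.exp (d - l * d + l^2/4) ≤ 2 - Real.exp (-d) := by
  by_cases h2 : d ≤ 1/2
  · refine ⟨2*d, by linarith, by linarith, ?_⟩
    have := tal_scalar1 d h h2
    rw [show d - 2*d*d + (2*d)^2/4 = d - d^2 by ring]
    linarith
  · refine ⟨1, by norm_num, le_rfl, ?_⟩
    have := tal_scalar1 (1/2) (by norm_num) le_rfl
    rw [show d - 1*d + 1^2/4 = 1/2-(1/2:ℝ)^2 by ring]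
    have : Real.exp (-d) ≤ Real.exp (-(1/2)) := Real.exp_le_exp.2 (by linarith)
    linarith

/-- logarithmic exponential integral -/
noncomputable def talL {E : Type} [MeasurableSpace E] (μ : Measure E) (f : E → ℝ) : ℝ :=
  Real.log (∫ x, Real.exp (f x) ∂μ)

section
variable {E : Type} [MeasurableSpace E] (μ : Measure E) [IsProbabilityMeasure μ]

lemma tal_int {f : E → ℝ} (hf : Measurable f) {C : ℝ} (hC : ∀ x, f x ≤ C) :
    Integrable (fun x => Real.exp (f x)) μ := by
  refine Integrable.of_mem_Icc 0 (Real.exp C) (by fun_prop) (ae_of_all _ fun x => ⟨(Real.exp_pos _).le, ?_⟩)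
  exact Real.exp_le_exp.2 (hC x)

lemma tal_exp_L {f : E → ℝ} (hf : Measurable f) {C : ℝ} (hC : ∀ x, f x ≤ C) :
    Real.exp (talL μ f) = ∫ x, Real.exp (f x) ∂μ :=
  Real.exp_log (integral_exp_pos (tal_int μ hf hC))

lemma talL_le {f : E → ℝ} (hf : Measurable f) {C : ℝ} (hC : ∀ x, f x ≤ C) :
    talL μ f ≤ C := by
  rw [← Real.exp_le_exp, tal_exp_L μ hf hC]
  calc _ ≤ ∫ x, Real.exp C ∂μ := integral_mono (tal_int μ hf hC) (integrable_const _)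
            (fun x => Real.exp_le_exp.2 (hC x))
    _ = _ := by simp

/-- the one-dimensional case -/
lemma tal_one {ι : Type} [Fintype ι] (w : ι → ℝ) (hw : ∀ k, 0 ≤ w k) (hw1 : ∑ k, w k = 1)
    (F : ι → E → ℝ) (hF : ∀ k, Measurable (F k)) (hF0 : ∀ k x, 0 ≤ F k x)
    (G : E → ℝ) (hG : Measurable G) (C : ℝ) (hC : ∀ x, G x ≤ C) (c : ℝ)
    (H : ∀ x, ∀ l : ι → ℝ, (∀ k, 0 ≤ l k) → (∀ k, l k ≤ 1) → ∀ z : ι → E,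
      G x ≤ c + ∑ k, w k * ((1 - l k) * F k x + l k * F k (z k) + (l k)^2/4)) :
    talL μ G ≤ c + ∑ k, w k * (- talL μ (fun x => - F k x)) := by
  have : Nonempty E := nonempty_of_isProbabilityMeasure μ
  let I : ι → ℝ := fun k => ⨅ x, F k x
  have hI : ∀ k x, I k ≤ F k x := fun k x => ciInf_le ⟨0, by rintro _ ⟨y, rfl⟩; exact hF0 k y⟩ x
  have H2 : ∀ x, ∀ l : ι → ℝ, (∀ k, 0 ≤ l k) → (∀ k, l k ≤ 1) →
      G x ≤ c + ∑ k, w k * ((1 - l k) * F k x + l k * I k + (l k)^2/4) := by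
    intro x l h0 h1
    refine le_of_forall_pos_le_add fun ε hε => ?_
    have : ∀ k, ∃ z, F k z < I k + ε := fun k =>
      exists_lt_of_ciInf_lt (show (⨅ x, F k x) < I k + ε by simp only [I]; linarith)
    choose z hz using this
    refine (H x l h0 h1 z).trans ?_
    have : ∑ k, w k * ((1 - l k) * F k x + l k * F k (z k) + (l k)^2/4) ≤
        ∑ k, (w k * ((1 - l k) * F k x + l k * I k + (l k)^2/4) + w k * ε) := by
      refine Finset.sum_le_sum fun k _ => ?_
      rw [← mul_add]
      refine mul_le_mul_of_nonneg_left ?_ (hw k)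
      nlinarith [h0 k, h1 k, hz k]
    rw [Finset.sum_add_distrib, ← Finset.sum_mul, hw1] at this
    linarith
  let s : ι → ℝ := fun k => ∫ x, Real.exp (-(F k x - I k)) ∂μ
  have hsi : ∀ k, Integrable (fun x => Real.exp (-(F k x - I k))) μ := fun k =>
    tal_int μ (((hF k).sub_const _).neg) (C := 0) (fun x => by linarith [hI k x])
  have hs : ∀ k, 0 < s k := fun k => integral_exp_pos (hsi k)
  have hLF : ∀ k, talL μ (fun x => - F k x) = - I k + Real.log (s k) := by
    intro k
    unfold talL
    rw [← Real.log_exp (- I k), ← Real.log_mul (Real.exp_ne_zero _) (hs k).ne']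
    congr 1
    simp only [s]
    rw [← integral_const_mul]
    congr 1
    ext x
    rw [← Real.exp_add]
    congr 1
    ring
  have hpt : ∀ x, Real.exp (G x) ≤ Real.exp (c + ∑ k, w k * (I k - Real.log (s k))) *
      ∑ k, w k * (s k * (2 - Real.exp (-(F k x - I k)))) := by
    intro x
    have : ∀ k, ∃ l : ℝ, 0 ≤ l ∧ l ≤ 1 ∧ Real.exp ((F k x - I k) - l * (F k x - I k) + l^2/4) ≤
        2 - Real.exp (-(F k x - I k)) := fun k => tal_scalar _ (by linarith [hI k x])
    choose l h0 h1 hl using this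
    have h3 := H2 x l h0 h1
    have h4 : Real.exp (∑ k, w k • (Real.log (s k) +
        ((F k x - I k) - l k * (F k x - I k) + (l k)^2/4))) ≤
        ∑ k, w k • Real.exp (Real.log (s k) +
        ((F k x - I k) - l k * (F k x - I k) + (l k)^2/4)) :=
      convexOn_exp.map_sum_le (fun k _ => hw k) hw1 (fun k _ => Set.mem_univ _)
    have h5 : ∑ k, w k • Real.exp (Real.log (s k) +
        ((F k x - I k) - l k * (F k x - I k) + (l k)^2/4)) ≤
        ∑ k, w k * (s k * (2 - Real.exp (-(F k x - I k)))) := by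
      refine Finset.sum_le_sum fun k _ => ?_
      rw [smul_eq_mul, Real.exp_add, Real.exp_log (hs k)]
      exact mul_le_mul_of_nonneg_left (mul_le_mul_of_nonneg_left (hl k) (hs k).le) (hw k)
    refine le_trans ?_ (mul_le_mul_of_nonneg_left (h4.trans h5) (Real.exp_pos _).le)
    rw [← Real.exp_add, Real.exp_le_exp]
    refine h3.trans (le_of_eq ?_)
    rw [add_assoc, ← Finset.sum_add_distrib]
    congr 1
    refine Finset.sum_congr rfl fun k _ => ?_
    simp only [smul_eq_mul]
    ring
  have hint : ∀ k, Integrable (fun x => w k * (s k * (2 - Real.exp (-(F k x - I k))))) μ :=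
    fun k => (((integrable_const _).sub (hsi k)).const_mul _).const_mul _
  have h6 : ∫ x, Real.exp (G x) ∂μ ≤ Real.exp (c + ∑ k, w k * (I k - Real.log (s k))) := by
    calc _ ≤ ∫ x, Real.exp (c + ∑ k, w k * (I k - Real.log (s k))) *
            ∑ k, w k * (s k * (2 - Real.exp (-(F k x - I k)))) ∂μ :=
          integral_mono (tal_int μ hG hC)
            ((integrable_finsetSum _ fun k _ => hint k).const_mul _) hpt
      _ = Real.exp (c + ∑ k, w k * (I k - Real.log (s k))) *
            ∑ k, w k * (s k * (2 - s k)) := by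
          rw [integral_const_mul, integral_finsetSum _ fun k _ => hint k]
          congr 1
          refine Finset.sum_congr rfl fun k _ => ?_
          rw [integral_const_mul, integral_const_mul, integral_sub (integrable_const _) (hsi k)]
          simp [s]
      _ ≤ Real.exp (c + ∑ k, w k * (I k - Real.log (s k))) * 1 := by
          refine mul_le_mul_of_nonneg_left ?_ (Real.exp_pos _).le
          rw [← hw1]
          refine Finset.sum_le_sum fun k _ => ?_
          nlinarith [hw k, mul_nonneg (hw k) (sq_nonneg (s k - 1))]
      _ = _ := mul_one _
  rw [← Real.exp_le_exp, tal_exp_L μ hG hC]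
  refine h6.trans (le_of_eq ?_)
  congr 2
  refine Finset.sum_congr rfl fun k _ => ?_
  rw [hLF]
  ring

end

lemma tal_cons_meas {n : ℕ} {Ω : Fin (n+1) → Type} [∀ i, MeasurableSpace (Ω i)] :
    Measurable (fun p : Ω 0 × (∀ i : Fin n, Ω i.succ) => (Fin.cons p.1 p.2 : ∀ i, Ω i)) := by
  refine measurable_pi_iff.2 fun i => ?_
  refine Fin.cases ?_ (fun j => ?_) i
  · simpa using measurable_fst
  · simp only [Fin.cons_succ]
    exact (measurable_pi_apply j).comp measurable_snd

lemma tal_fubini {n : ℕ} {Ω : Fin (n+1) → Type} [∀ i, MeasurableSpace (Ω i)]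
    (μ : ∀ i, Measure (Ω i)) [∀ i, IsProbabilityMeasure (μ i)]
    {f : (∀ i, Ω i) → ℝ} (hf : Measurable f) {C : ℝ} (hC : ∀ x, f x ≤ C) :
    Measurable (fun a => talL (Measure.pi fun i : Fin n => μ i.succ)
      (fun y => f (Fin.cons a y))) ∧
    talL (Measure.pi μ) f = talL (μ 0) (fun a => talL (Measure.pi fun i : Fin n => μ i.succ)
      (fun y => f (Fin.cons a y))) := by
  have hm : Measurable (fun p : Ω 0 × (∀ i : Fin n, Ω i.succ) => f (Fin.cons p.1 p.2)) :=
    hf.comp tal_cons_meas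
  constructor
  · refine Real.measurable_log.comp ?_
    exact (StronglyMeasurable.integral_prod_right'
      (f := fun p : Ω 0 × (∀ i : Fin n, Ω i.succ) => Real.exp (f (Fin.cons p.1 p.2)))
      (Real.measurable_exp.comp hm).stronglyMeasurable).measurable
  · have h1 : ∫ x, Real.exp (f x) ∂(Measure.pi μ) =
        ∫ p : Ω 0 × (∀ i : Fin n, Ω i.succ), Real.exp (f (Fin.cons p.1 p.2))
          ∂((μ 0).prod (Measure.pi fun i : Fin n => μ i.succ)) := by
      rw [← ((measurePreserving_piFinSuccAbove μ 0).symm).integral_comp']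
      simp_rw [MeasurableEquiv.piFinSuccAbove_symm_apply, Fin.insertNthEquiv,
        Equiv.coe_fn_mk, Fin.insertNth_zero]
      rfl
    unfold talL
    rw [h1, integral_prod _ (tal_int _ hm (fun p => hC _))]
    congr 2
    ext a
    exact (tal_exp_L _ (f := fun y => f (Fin.cons a y)) (hm.comp measurable_prodMk_left)
      (fun y => hC _)).symm

/-- Talagrand's inequality in a dual, multi-function form -/
lemma tal_main (n : ℕ) : ∀ (Ω : Fin n → Type) [∀ i, MeasurableSpace (Ω i)]
    (μ : ∀ i, Measure (Ω i)) [∀ i, IsProbabilityMeasure (μ i)]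
    (ι : Type) [Fintype ι] (w : ι → ℝ) (_ : ∀ k, 0 ≤ w k) (_ : ∑ k, w k = 1)
    (f : ι → (∀ i, Ω i) → ℝ) (_ : ∀ k, Measurable (f k)) (_ : ∀ k x, 0 ≤ f k x)
    (g : (∀ i, Ω i) → ℝ) (_ : Measurable g) (C : ℝ) (_ : ∀ x, g x ≤ C) (c : ℝ)
    (_ : ∀ x, ∃ (b : Fin n → ℝ) (A : ι → ℝ), (∀ i, 0 ≤ b i) ∧
      (∀ k y, A k - ∑ i, (if x i ≠ y i then b i else 0) ≤ f k y) ∧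
      g x ≤ c + ∑ k, w k * A k - ∑ i, (b i)^2),
    talL (Measure.pi μ) g ≤ c + ∑ k, w k * (- talL (Measure.pi μ) (fun x => - f k x)) := by
  induction n with
  | zero =>
    intro Ω _ μ _ ι _ w hw hw1 f hf hf0 g hg C hC c H
    have hL : ∀ h : (∀ i, Ω i) → ℝ, talL (Measure.pi μ) h = h default := by
      intro h
      unfold talL
      have : ∀ x, h x = h default := fun x => congrArg h (Subsingleton.elim _ _)
      simp_rw [this]
      simp
    simp_rw [hL]
    obtain ⟨b, A, _, h1, h2⟩ := H default
    simp only [Finset.univ_eq_empty, Finset.sum_empty, sub_zero] at h1 h2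
    refine h2.trans ?_
    gcongr with k
    · exact hw k
    · simpa using h1 k default
  | succ n ih =>
    intro Ω _ μ _ ι _ w hw hw1 f hf hf0 g hg C hC c H
    obtain ⟨hGm, hGe⟩ := tal_fubini μ hg hC
    have hFC : ∀ k x, - f k x ≤ 0 := fun k x => by linarith [hf0 k x]
    have hF := fun k => tal_fubini μ (hf k).neg (hFC k)
    have hcm : ∀ a : Ω 0, Measurable (fun y : (∀ i : Fin n, Ω i.succ) =>
        (Fin.cons a y : ∀ i, Ω i)) := fun a => tal_cons_meas.comp measurable_prodMk_left
    rw [hGe]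
    have key := tal_one (μ 0) w hw hw1
      (fun k a => - talL (Measure.pi fun i : Fin n => μ i.succ) (fun y => - f k (Fin.cons a y)))
      (fun k => (hF k).1.neg)
      (fun k a => by
        have := talL_le (Measure.pi fun i : Fin n => μ i.succ)
          (f := fun y => - f k (Fin.cons a y)) ((hf k).neg.comp (hcm a)) (fun y => hFC k _)
        linarith)
      _ hGm C (fun a => talL_le _ (hg.comp (hcm a)) (fun y => hC _)) c ?_
    · refine key.trans (le_of_eq ?_)
      congr 1
      refine Finset.sum_congr rfl fun k _ => ?_
      rw [show talL (Measure.pi μ) (fun x => - f k x) = _ from (hF k).2]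
      simp only [neg_neg]
      rfl
    · intro x l h0 h1 z
      have := ih (fun i => Ω i.succ) (fun i => μ i.succ) (ι × Bool)
        (fun p => w p.1 * (if p.2 then l p.1 else 1 - l p.1))
        (fun p => mul_nonneg (hw _) (by split_ifs <;> linarith [h0 p.1, h1 p.1]))
        (by
          rw [Fintype.sum_prod_type]
          refine Eq.trans ?_ hw1
          refine Finset.sum_congr rfl fun k _ => ?_
          simp
          ring)
        (fun p y => f p.1 (Fin.cons (if p.2 then z p.1 else x) y))
        (fun p => (hf _).comp (hcm _)) (fun p y => hf0 _ _)
        (fun y => g (Fin.cons x y)) (hg.comp (hcm x)) C (fun y => hC _)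
        (c + ∑ k, w k * ((l k)^2/4)) ?_
      · refine this.trans (le_of_eq ?_)
        rw [Fintype.sum_prod_type, add_assoc, ← Finset.sum_add_distrib]
        congr 1
        refine Finset.sum_congr rfl fun k _ => ?_
        simp
        ring
      · intro x'
        obtain ⟨b, A, hb, hA, hg'⟩ := H (Fin.cons x x')
        refine ⟨fun i => b i.succ, fun p => if p.2 then A p.1 - b 0 else A p.1,
          fun i => hb _, ?_, ?_⟩
        · rintro ⟨k, q⟩ y
          have h2 := hA k (Fin.cons (if q then z k else x) y)
          rw [Fin.sum_univ_succ] at h2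
          simp only [Fin.cons_zero, Fin.cons_succ] at h2
          refine le_trans ?_ h2
          cases q
          · simp
          · have := hb 0
            simp only [if_true]
            split_ifs <;> linarith
        · refine hg'.trans ?_
          rw [Fin.sum_univ_succ, Fintype.sum_prod_type]
          have e : ∑ k, ∑ q : Bool, w k * (if q then l k else 1 - l k) *
              (if q then A k - b 0 else A k) = ∑ k, w k * A k - ∑ k, w k * (l k * b 0) := by
            rw [← Finset.sum_sub_distrib]
            refine Finset.sum_congr rfl fun k _ => ?_
            simp
            ring
          simp only
          rw [e]
          have e2 : ∑ k, w k * (l k * b 0) ≤ ∑ k, (w k * ((l k)^2/4) + w k * (b 0)^2) := by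
            refine Finset.sum_le_sum fun k _ => ?_
            nlinarith [mul_nonneg (hw k) (sq_nonneg (l k / 2 - b 0))]
          rw [Finset.sum_add_distrib, ← Finset.sum_mul, hw1] at e2
          linarith

/-- two-level bound -/
lemma tal_levels {n : ℕ} (Ω : Fin n → Type) [∀ i, MeasureSpace (Ω i)]
    [∀ i, IsProbabilityMeasure (volume : Measure (Ω i))]
    (X : (∀ i, Ω i) → ℝ) (hXmeas : Measurable X)
    (r : ℝ) (hr : 0 < r)
    (hcert : ∀ x : ∀ i, Ω i, ∃ b : Fin n → ℝ, (∀ i, 0 ≤ b i) ∧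
      (∑ i, (b i) ^ 2 ≤ r * X x) ∧
      ∀ y : ∀ i, Ω i,
        X x - ∑ i ∈ Finset.univ.filter (fun i => x i ≠ y i), b i ≤ X y)
    (a u : ℝ) (ha : 0 ≤ a) (hau : a < u) :
    (prodMeasure Ω).real {x | u ≤ X x} * (prodMeasure Ω).real {x | X x ≤ a} ≤
      Real.exp (-(u-a)^2/(4*r*u)) := by
  have hu : 0 < u := by linarith
  set α := (u-a)/(2*r*u) with hα
  have hα0 : 0 ≤ α := div_nonneg (by linarith) (by positivity)
  set T := (u-a)^2/(4*r*u) with hT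
  have hT0 : 0 ≤ T := by positivity
  have hTα : α * (u-a) - α^2 * (r*u) = T := by
    rw [hα, hT]; field_simp; ring
  have hαr : α * r ≤ 1 := by
    rw [hα, div_mul_eq_mul_div, div_le_one (by positivity)]; nlinarith
  set μ := prodMeasure Ω with hμ
  have : IsProbabilityMeasure μ := by rw [hμ]; unfold prodMeasure; infer_instance
  have hSu : MeasurableSet {x | u ≤ X x} := measurableSet_le measurable_const hXmeas
  have hSa : MeasurableSet {x | X x ≤ a} := measurableSet_le hXmeas measurable_const
  set g : (∀ i, Ω i) → ℝ := fun x => if u ≤ X x then T else 0 with hg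
  set f : (∀ i, Ω i) → ℝ := fun x => α * max (X x - a) 0 with hf
  have hgm : Measurable g := Measurable.ite hSu measurable_const measurable_const
  have hfm : Measurable f := by fun_prop
  have hf0 : ∀ x, 0 ≤ f x := fun x => mul_nonneg hα0 (le_max_right _ _)
  have hgT : ∀ x, g x ≤ T := fun x => by simp only [hg]; split_ifs <;> linarith
  have main := tal_main n Ω (fun i => volume) Unit (fun _ => 1) (by simp) (by simp)
    (fun _ => f) (fun _ => hfm) (fun _ => hf0) g hgm T hgT 0 ?_
  · simp only [Finset.univ_unique, Finset.sum_const, Finset.card_singleton, one_smul, one_mul,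
      zero_add] at main
    change talL μ g ≤ - talL μ (fun x => - f x) at main
    have hm' : talL μ g + talL μ (fun x => - f x) ≤ 0 := by linarith
    rw [← Real.exp_le_exp, Real.exp_add, tal_exp_L μ hgm hgT,
      tal_exp_L μ (f := fun x => - f x) hfm.neg (C := 0) (fun x => by simpa using hf0 x), Real.exp_zero] at hm'
    have h1 : Real.exp T * μ.real {x | u ≤ X x} ≤ ∫ x, Real.exp (g x) ∂μ := by
      rw [mul_comm, ← smul_eq_mul, ← integral_indicator_const _ hSu]
      refine integral_mono ((integrable_const _).indicator hSu) (tal_int μ hgm hgT) fun x => ?_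
      simp only [Set.indicator, hg, Set.mem_ofPred_eq]
      split_ifs <;> simp
    have h2 : μ.real {x | X x ≤ a} ≤ ∫ x, Real.exp (- f x) ∂μ := by
      have := integral_indicator_const (μ := μ) (1:ℝ) hSa
      rw [smul_eq_mul, mul_one] at this
      rw [← this]
      refine integral_mono ((integrable_const _).indicator hSa)
        (tal_int μ (f := fun x => - f x) hfm.neg (C := 0) (fun x => by simpa using hf0 x)) fun x => ?_
      simp only [Set.indicator, hf, Set.mem_ofPred_eq]
      split_ifs with h
      · rw [max_eq_right (by linarith)]; simp
      · exact (Real.exp_pos _).le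
    have h3 : Real.exp T * μ.real {x | u ≤ X x} * μ.real {x | X x ≤ a} ≤ 1 :=
      (mul_le_mul h1 h2 measureReal_nonneg
        (integral_nonneg fun x => (Real.exp_pos _).le)).trans hm'
    rw [neg_div, ← hT, Real.exp_neg, ← one_div, le_div_iff₀ (Real.exp_pos _)]
    linarith
  · intro x
    by_cases hx : u ≤ X x
    · obtain ⟨b, hb, hb2, hby⟩ := hcert x
      refine ⟨fun i => α * b i, fun _ => α * (X x - a), fun i => mul_nonneg hα0 (hb i), ?_, ?_⟩
      · intro _ y
        have h1 := hby y
        rw [Finset.sum_filter] at h1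
        have h2 : ∑ i, (if x i ≠ y i then α * b i else 0) =
            α * ∑ i, (if x i ≠ y i then b i else 0) := by
          rw [Finset.mul_sum]
          refine Finset.sum_congr rfl fun i _ => ?_
          split_ifs <;> simp
        rw [h2, ← mul_sub]
        refine mul_le_mul_of_nonneg_left (le_trans ?_ (le_max_left _ _)) hα0
        linarith
      · simp only [hg, hx, if_true, mul_pow, ← Finset.mul_sum]
        simp only [Finset.univ_unique, Finset.sum_const, Finset.card_singleton, one_smul, one_mul,
          zero_add]
        have h1 : α^2 * ∑ i, (b i)^2 ≤ α^2 * (r * X x) :=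
          mul_le_mul_of_nonneg_left hb2 (sq_nonneg _)
        have h2 : 0 ≤ α * (1 - α * r) * (X x - u) :=
          mul_nonneg (mul_nonneg hα0 (by linarith)) (by linarith)
        nlinarith
    · refine ⟨fun _ => 0, fun _ => 0, by simp, ?_, ?_⟩
      · intro _ y
        simpa using hf0 y
      · simp [hg, hx]

theorem stmt_13 {n : ℕ} (Ω : Fin n → Type) [∀ i, MeasureSpace (Ω i)]
    [∀ i, IsProbabilityMeasure (volume : Measure (Ω i))]
    (X : (∀ i, Ω i) → ℝ) (hXmeas : Measurable X) (hX0 : ∀ x, 0 ≤ X x)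
    (hXne : X ≠ 0)
    (r : ℝ) (hr : 0 < r)
    (Ωstar : Set (∀ i, Ω i)) (hΩstar : MeasurableSet Ωstar)
    (hcert : ∀ x : ∀ i, Ω i, ∃ b : Fin n → ℝ, (∀ i, 0 ≤ b i) ∧
      (∑ i, (b i) ^ 2 ≤ r * X x) ∧
      ∀ y : ∀ i, Ω i,
        X x - ∑ i ∈ Finset.univ.filter (fun i => x i ≠ y i), b i ≤ X y) :
    ∀ t : ℝ, 0 < t → ∀ m : ℝ, IsMedian X m →
      ((prodMeasure Ω) {x | |X x - m| > t}).toReal ≤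
        4 * Real.exp (-t ^ 2 / (4 * r * (m + t))) +
          4 * ((prodMeasure Ω) Ωstar).toReal := by
  intro t ht m ⟨hm1, hm2⟩
  have : IsProbabilityMeasure (prodMeasure Ω) := by unfold prodMeasure; infer_instance
  have hs : 0 ≤ ((prodMeasure Ω) Ωstar).toReal := ENNReal.toReal_nonneg
  have hm0 : 0 ≤ m := by
    by_contra hneg
    have : {x | X x ≤ m} = ∅ := by
      ext x
      simp only [Set.mem_ofPred_eq, Set.mem_empty_iff_false, iff_false]
      linarith [hX0 x]
    rw [this] at hm1
    norm_num at hm1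
  change (1:ℝ)/2 ≤ (prodMeasure Ω).real _ at hm1 hm2
  change (prodMeasure Ω).real _ ≤ _
  have hup : (prodMeasure Ω).real {x | m + t ≤ X x} ≤
      2 * Real.exp (-t ^ 2 / (4 * r * (m + t))) := by
    have h := tal_levels Ω X hXmeas r hr hcert m (m+t) hm0 (by linarith)
    rw [add_sub_cancel_left] at h
    nlinarith [measureReal_nonneg (μ := prodMeasure Ω) (s := {x | m + t ≤ X x})]
  have hlow : (prodMeasure Ω).real {x | X x ≤ m - t} ≤
      2 * Real.exp (-t ^ 2 / (4 * r * (m + t))) := by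
    by_cases hmt : 0 ≤ m - t
    · have h := tal_levels Ω X hXmeas r hr hcert (m-t) m hmt (by linarith)
      have h2 : Real.exp (-(m-(m-t))^2/(4*r*m)) ≤ Real.exp (-t ^ 2 / (4 * r * (m + t))) := by
        rw [Real.exp_le_exp, sub_sub_cancel, neg_div, neg_div, neg_le_neg_iff]
        have : 0 < m := by linarith
        gcongr
        linarith
      nlinarith [measureReal_nonneg (μ := prodMeasure Ω) (s := {x | X x ≤ m - t})]
    · have : {x | X x ≤ m - t} = ∅ := by
        ext x
        simp only [Set.mem_ofPred_eq, Set.mem_empty_iff_false, iff_false]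
        linarith [hX0 x]
      rw [this, measureReal_empty]
      positivity
  have hsub : {x | |X x - m| > t} ⊆ {x | m + t ≤ X x} ∪ {x | X x ≤ m - t} := by
    intro x hx
    simp only [Set.mem_ofPred_eq, gt_iff_lt, lt_abs] at hx
    rcases hx with h | h
    · left; simp only [Set.mem_ofPred_eq]; linarith
    · right; simp only [Set.mem_ofPred_eq]; linarith
  have := (measureReal_mono (μ := prodMeasure Ω) hsub).trans (measureReal_union_le _ _)
  linarith
end

section
/- Let X be a non-negative bounded random variable, not identically 0, determined by n independent trials T₁,…,T_n. Let r > 0 and let Ω* be a measurable subset of the product space. Suppose that for every outcome x = (x₁,…,x_n) of the trials there exist non-negative reals b₁,…,b_n such that (1) Σ_i b_i² ≤ r·X(x), and (2) for any outcome y, X(y) ≥ X(x) − Σ_{i : x_i ≠ y_i} b_i. Then for any median Med(X) of X, |E(X) − Med(X)| ≤ 48·√(r·E(X)) + 64·√r + 4·sup(X)·Pr(Ω*). -/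
open MeasureTheory
open scoped Classical

namespace ES

variable {n : ℕ} {Ω : Fin n → Type} [∀ i, MeasureSpace (Ω i)]

/-- Product measure on pairs of independent copies. -/
noncomputable def dbl (Ω : Fin n → Type) [∀ i, MeasureSpace (Ω i)] :
    Measure (∀ i, Ω i × Ω i) :=
  Measure.pi fun i => (volume : Measure (Ω i)).prod (volume : Measure (Ω i))

/-- Select second copy on `S`, first copy elsewhere. -/
noncomputable def sel (S : Finset (Fin n)) (z : ∀ i, Ω i × Ω i) : ∀ i, Ω i :=
  fun j => if j ∈ S then (z j).2 else (z j).1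

/-- Swap copies on `T`. -/
noncomputable def sw (T : Finset (Fin n)) (z : ∀ i, Ω i × Ω i) : ∀ i, Ω i × Ω i :=
  fun j => (if j ∈ T then Prod.swap else id) (z j)

lemma sel_meas (S : Finset (Fin n)) : Measurable (sel (Ω := Ω) S) := by
  refine measurable_pi_iff.2 fun j => ?_
  unfold sel
  by_cases h : j ∈ S
  · simp only [h, if_true]
    exact measurable_snd.comp (measurable_pi_apply j)
  · simp only [h, if_false]
    exact measurable_fst.comp (measurable_pi_apply j)

lemma sel_sw (S T U : Finset (Fin n)) (hU : ∀ j, j ∈ U ↔ ¬ (j ∈ S ↔ j ∈ T))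
    (z : ∀ i, Ω i × Ω i) : sel S (sw T z) = sel U z := by
  funext j
  unfold sel sw
  have := hU j
  by_cases h : j ∈ S <;> by_cases h' : j ∈ T <;> simp_all

variable [∀ i, IsProbabilityMeasure (volume : Measure (Ω i))]

instance : IsProbabilityMeasure (dbl Ω) := by unfold dbl; infer_instance
instance : IsProbabilityMeasure (prodMeasure Ω) := by unfold prodMeasure; infer_instance

lemma sw_mp (T : Finset (Fin n)) : MeasurePreserving (sw T) (dbl Ω) (dbl Ω) := by
  unfold sw dbl
  refine measurePreserving_pi _ _ fun j => ?_
  by_cases h : j ∈ T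
  · simp only [h, if_true]; exact Measure.measurePreserving_swap
  · simp only [h, if_false]; exact MeasurePreserving.id _

lemma pair_mp : MeasurePreserving (fun z : ∀ i, Ω i × Ω i => (sel ∅ z, sel Finset.univ z))
    (dbl Ω) ((prodMeasure Ω).prod (prodMeasure Ω)) where
  measurable := (sel_meas _).prodMk (sel_meas _)
  map_eq := by
    unfold prodMeasure dbl
    refine (Measure.FiniteSpanningSetsIn.ext ?_ (isPiSystem_pi.prod isPiSystem_pi)
      ((Measure.FiniteSpanningSetsIn.pi fun i ↦ (volume : Measure (Ω i)).toFiniteSpanningSetsIn).prod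
      (Measure.FiniteSpanningSetsIn.pi
        (fun i ↦ (volume : Measure (Ω i)).toFiniteSpanningSetsIn))) ?_).symm
    · refine (generateFrom_eq_prod generateFrom_pi generateFrom_pi ?_ ?_).symm
      · exact (Measure.FiniteSpanningSetsIn.pi
          (fun i ↦ (volume : Measure (Ω i)).toFiniteSpanningSetsIn)).isCountablySpanning
      · exact (Measure.FiniteSpanningSetsIn.pi
          (fun i ↦ (volume : Measure (Ω i)).toFiniteSpanningSetsIn)).isCountablySpanning
    · rintro _ ⟨s, ⟨s, hs, rfl⟩, ⟨_, ⟨t, ht, rfl⟩, rfl⟩⟩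
      have hs' : MeasurableSet (Set.univ.pi s) :=
        MeasurableSet.univ_pi fun i => hs i (Set.mem_univ _)
      have ht' : MeasurableSet (Set.univ.pi t) :=
        MeasurableSet.univ_pi fun i => ht i (Set.mem_univ _)
      rw [Measure.map_apply ((sel_meas _).prodMk (sel_meas _)) (hs'.prod ht')]
      rw [show (fun z : ∀ i, Ω i × Ω i => (sel ∅ z, sel Finset.univ z)) ⁻¹'
          (Set.univ.pi s ×ˢ Set.univ.pi t) = (Set.univ.pi fun i ↦ s i ×ˢ t i) by
          ext; simp [Set.mem_pi, forall_and, sel]]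
      simp_rw [Measure.pi_pi, Measure.prod_prod, Measure.pi_pi, Finset.prod_mul_distrib]

lemma int_sw (T : Finset (Fin n)) {G : (∀ i, Ω i × Ω i) → ℝ} (hG : Measurable G) :
    ∫ z, G (sw T z) ∂(dbl Ω) = ∫ z, G z ∂(dbl Ω) := by
  conv_rhs => rw [← (sw_mp (Ω := Ω) T).map_eq]
  rw [integral_map (sw_mp T).measurable.aemeasurable hG.aestronglyMeasurable]

lemma int_bdd {α : Type*} [MeasurableSpace α] {μ : Measure α} [IsProbabilityMeasure μ]
    {f : α → ℝ} (hf : Measurable f) (C : ℝ) (h : ∀ x, |f x| ≤ C) : Integrable f μ :=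
  Integrable.of_bound hf.aestronglyMeasurable C (Filter.Eventually.of_forall h)

lemma int4 {α : Type*} [MeasurableSpace α] {μ : Measure α} {f g h k : α → ℝ}
    (hf : Integrable f μ) (hg : Integrable g μ) (hh : Integrable h μ) (hk : Integrable k μ) :
    ∫ x, (f x + g x + h x + k x) ∂μ
      = ∫ x, f x ∂μ + ∫ x, g x ∂μ + ∫ x, h x ∂μ + ∫ x, k x ∂μ := by
  have h1 : ∫ x, (f x + g x + h x + k x) ∂μ = ∫ x, (f x + g x + h x) ∂μ + ∫ x, k x ∂μ :=
    integral_add ((hf.add hg).add hh) hk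
  have h2 : ∫ x, (f x + g x + h x) ∂μ = ∫ x, (f x + g x) ∂μ + ∫ x, h x ∂μ :=
    integral_add (hf.add hg) hh
  rw [h1, h2, integral_add hf hg]

lemma int4' {α : Type*} [MeasurableSpace α] {μ : Measure α} {f g h k : α → ℝ}
    (hf : Integrable f μ) (hg : Integrable g μ) (hh : Integrable h μ) (hk : Integrable k μ) :
    ∫ x, (f x - g x - h x + k x) ∂μ
      = ∫ x, f x ∂μ - ∫ x, g x ∂μ - ∫ x, h x ∂μ + ∫ x, k x ∂μ := by
  have h1 : ∫ x, (f x - g x - h x + k x) ∂μ = ∫ x, (f x - g x - h x) ∂μ + ∫ x, k x ∂μ :=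
    integral_add ((hf.sub hg).sub hh) hk
  have h2 : ∫ x, (f x - g x - h x) ∂μ = ∫ x, (f x - g x) ∂μ - ∫ x, h x ∂μ :=
    integral_sub (hf.sub hg) hh
  rw [h1, h2, integral_sub hf hg]

lemma step (X : (∀ i, Ω i) → ℝ) (hX : Measurable X) (M : ℝ) (h0 : ∀ x, 0 ≤ X x)
    (hM : ∀ x, X x ≤ M) (S : Finset (Fin n)) (i : Fin n) (hi : i ∉ S) :
    (∫ z, X (sel ∅ z) * X (sel S z) ∂(dbl Ω)) - ∫ z, X (sel ∅ z) * X (sel (insert i S) z) ∂(dbl Ω)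
      ≤ ∫ z, (max (X (sel ∅ z) - X (sel {i} z)) 0) ^ 2 ∂(dbl Ω) := by
  have m : ∀ S, Measurable fun z : (∀ i, Ω i × Ω i) => X (sel S z) :=
    fun S => hX.comp (sel_meas S)
  have hab : ∀ x, |X x| ≤ M := fun x => by rw [abs_of_nonneg (h0 x)]; exact hM x
  have ip : ∀ S T, Integrable (fun z : (∀ i, Ω i × Ω i) => X (sel S z) * X (sel T z)) (dbl Ω) := by
    intro S T
    refine int_bdd ((m S).mul (m T)) (M * M) fun z => ?_
    rw [abs_mul]
    exact mul_le_mul (hab _) (hab _) (abs_nonneg _) ((abs_nonneg _).trans (hab (sel S z)))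
  have mq : ∀ S T, Measurable fun z : (∀ i, Ω i × Ω i) =>
      (max (X (sel S z) - X (sel T z)) 0) ^ 2 :=
    fun S T => (((m S).sub (m T)).max measurable_const).pow_const 2
  have iq : ∀ S T, Integrable (fun z : (∀ i, Ω i × Ω i) =>
      (max (X (sel S z) - X (sel T z)) 0) ^ 2) (dbl Ω) := by
    intro S T
    refine int_bdd (mq S T) (M ^ 2) fun z => ?_
    rw [abs_of_nonneg (sq_nonneg _)]
    refine pow_le_pow_left₀ (le_max_right _ _) (max_le ?_ ((h0 (sel S z)).trans (hM _))) 2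
    linarith [h0 (sel T z), hM (sel S z)]
  have tr : ∀ S T U S' T' : Finset (Fin n), (∀ j, j ∈ S' ↔ ¬ (j ∈ S ↔ j ∈ U)) → (∀ j, j ∈ T' ↔ ¬ (j ∈ T ↔ j ∈ U)) →
      ∫ z, X (sel S' z) * X (sel T' z) ∂(dbl Ω) = ∫ z, X (sel S z) * X (sel T z) ∂(dbl Ω) := by
    intro S T U S' T' h1 h2
    rw [← int_sw U (G := fun z => X (sel S z) * X (sel T z)) ((m S).mul (m T))]
    simp only [sel_sw S U S' h1, sel_sw T U T' h2]
  have tq : ∀ S T U S' T' : Finset (Fin n), (∀ j, j ∈ S' ↔ ¬ (j ∈ S ↔ j ∈ U)) → (∀ j, j ∈ T' ↔ ¬ (j ∈ T ↔ j ∈ U)) →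
      ∫ z, (max (X (sel S' z) - X (sel T' z)) 0) ^ 2 ∂(dbl Ω)
        = ∫ z, (max (X (sel S z) - X (sel T z)) 0) ^ 2 ∂(dbl Ω) := by
    intro S T U S' T' h1 h2
    rw [← int_sw U (mq S T)]
    simp only [sel_sw S U S' h1, sel_sw T U T' h2]
  have e1 := tr ∅ S {i} {i} (insert i S) (by simp) (by intro j; by_cases h : j = i <;> simp_all)
  have e2 := tr ∅ (insert i S) {i} {i} S (by simp) (by intro j; by_cases h : j = i <;> simp_all)
  have q1 := tq ∅ {i} {i} {i} ∅ (by simp) (by simp)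
  have q2 := tq ∅ {i} S S (insert i S) (by simp)
    (by intro j; by_cases h : j = i <;> simp_all)
  have q3 := tq {i} ∅ S (insert i S) S (by intro j; by_cases h : j = i <;> simp_all) (by simp)
  have key : ∫ z, (X (sel ∅ z) * X (sel S z) - X (sel ∅ z) * X (sel (insert i S) z)
        - X (sel {i} z) * X (sel S z) + X (sel {i} z) * X (sel (insert i S) z)) ∂(dbl Ω) ≤
      ∫ z, ((max (X (sel ∅ z) - X (sel {i} z)) 0) ^ 2 + (max (X (sel {i} z) - X (sel ∅ z)) 0) ^ 2
        + (max (X (sel S z) - X (sel (insert i S) z)) 0) ^ 2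
        + (max (X (sel (insert i S) z) - X (sel S z)) 0) ^ 2) / 2 ∂(dbl Ω) := by
    refine integral_mono ((((ip _ _).sub (ip _ _)).sub (ip _ _)).add (ip _ _))
      (((((iq _ _).add (iq _ _)).add (iq _ _)).add (iq _ _)).div_const 2) fun z => ?_
    have sq : ∀ a b : ℝ, (max (a - b) 0) ^ 2 + (max (b - a) 0) ^ 2 = (a - b) ^ 2 := by
      intro a b
      rcases le_total a b with h | h
      · rw [max_eq_right (by linarith), max_eq_left (by linarith)]; ring
      · rw [max_eq_left (by linarith), max_eq_right (by linarith)]; ring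
    have s1 := sq (X (sel ∅ z)) (X (sel {i} z))
    have s2 := sq (X (sel S z)) (X (sel (insert i S) z))
    dsimp only
    nlinarith [sq_nonneg ((X (sel ∅ z) - X (sel {i} z)) - (X (sel S z) - X (sel (insert i S) z)))]
  rw [integral_div, int4 (iq _ _) (iq _ _) (iq _ _) (iq _ _),
    int4' (ip _ _) (ip _ _) (ip _ _) (ip _ _)] at key
  linarith

lemma var_le (X : (∀ i, Ω i) → ℝ) (hX : Measurable X) (M : ℝ) (h0 : ∀ x, 0 ≤ X x)
    (hM : ∀ x, X x ≤ M) (r : ℝ)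
    (hcert : ∀ x : ∀ i, Ω i, ∃ b : Fin n → ℝ, (∀ i, 0 ≤ b i) ∧
      (∑ i, (b i) ^ 2 ≤ r * X x) ∧
      ∀ y : ∀ i, Ω i,
        X x - ∑ i ∈ Finset.univ.filter (fun i => x i ≠ y i), b i ≤ X y) :
    (∫ x, X x ^ 2 ∂(prodMeasure Ω)) - (∫ x, X x ∂(prodMeasure Ω)) ^ 2
      ≤ r * ∫ x, X x ∂(prodMeasure Ω) := by
  have m : ∀ S, Measurable fun z : (∀ i, Ω i × Ω i) => X (sel S z) :=
    fun S => hX.comp (sel_meas S)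
  have tele : ∀ S : Finset (Fin n),
      (∫ z, X (sel ∅ z) * X (sel ∅ z) ∂(dbl Ω)) - ∫ z, X (sel ∅ z) * X (sel S z) ∂(dbl Ω)
      ≤ ∑ i ∈ S, ∫ z, (max (X (sel ∅ z) - X (sel {i} z)) 0) ^ 2 ∂(dbl Ω) := by
    intro S
    induction S using Finset.induction_on with
    | empty => simp
    | insert i S hi ih =>
      rw [Finset.sum_insert hi]
      have := step X hX M h0 hM S i hi
      linarith
  have t := tele Finset.univ
  have iq : ∀ S T, Integrable (fun z : (∀ i, Ω i × Ω i) =>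
      (max (X (sel S z) - X (sel T z)) 0) ^ 2) (dbl Ω) := by
    intro S T
    refine int_bdd (((m S).sub (m T)).max measurable_const |>.pow_const 2) (M ^ 2) fun z => ?_
    rw [abs_of_nonneg (sq_nonneg _)]
    refine pow_le_pow_left₀ (le_max_right _ _) (max_le ?_ ((h0 (sel S z)).trans (hM _))) 2
    linarith [h0 (sel T z), hM (sel S z)]
  have hab : ∀ x, |X x| ≤ M := fun x => by rw [abs_of_nonneg (h0 x)]; exact hM x
  rw [← integral_finsetSum _ (fun i _ => iq _ _)] at t
  have t2 : ∫ z, ∑ i, (max (X (sel ∅ z) - X (sel {i} z)) 0) ^ 2 ∂(dbl Ω)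
      ≤ ∫ z, r * X (sel ∅ z) ∂(dbl Ω) := by
    refine integral_mono (integrable_finsetSum _ fun i _ => iq _ _)
      ((int_bdd (m ∅) M fun z => hab _).const_mul r) fun z => ?_
    obtain ⟨b, hb0, hb, hy⟩ := hcert (sel ∅ z)
    refine (Finset.sum_le_sum fun i _ => ?_).trans hb
    refine pow_le_pow_left₀ (le_max_right _ _) (max_le ?_ (hb0 i)) 2
    have h1 := hy (sel {i} z)
    have h2 : ∑ j ∈ Finset.univ.filter (fun j => sel ∅ z j ≠ sel {i} z j), b j
        ≤ ∑ j ∈ {i}, b j := by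
      refine Finset.sum_le_sum_of_subset_of_nonneg ?_ fun j _ _ => hb0 j
      intro j hj
      by_contra hne
      simp only [Finset.mem_filter] at hj
      exact hj.2 (by simp [sel, hne])
    rw [Finset.sum_singleton] at h2
    linarith
  have p := pair_mp (Ω := Ω)
  have f1 : MeasurePreserving (sel ∅) (dbl Ω) (prodMeasure Ω) :=
    measurePreserving_fst.comp p
  have c : ∀ G : (∀ i, Ω i) → ℝ, Measurable G →
      ∫ z, G (sel ∅ z) ∂(dbl Ω) = ∫ x, G x ∂(prodMeasure Ω) := by
    intro G hG
    conv_rhs => rw [← f1.map_eq]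
    rw [integral_map f1.measurable.aemeasurable hG.aestronglyMeasurable]
  have d : ∫ z, X (sel ∅ z) * X (sel Finset.univ z) ∂(dbl Ω)
      = (∫ x, X x ∂(prodMeasure Ω)) ^ 2 := by
    rw [sq, ← integral_prod_mul]
    conv_rhs => rw [← p.map_eq]
    rw [integral_map p.measurable.aemeasurable]
    exact ((hX.comp measurable_fst).mul (hX.comp measurable_snd)).aestronglyMeasurable
  rw [d, c (fun x => X x * X x) (hX.mul hX)] at t
  rw [integral_const_mul, c X hX] at t2
  simp only [sq (X _)]
  linarith

end ES

theorem stmt_14 {n : ℕ} (Ω : Fin n → Type) [∀ i, MeasureSpace (Ω i)]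
    [∀ i, IsProbabilityMeasure (volume : Measure (Ω i))]
    (X : (∀ i, Ω i) → ℝ) (hXmeas : Measurable X) (hX0 : ∀ x, 0 ≤ X x)
    (hXne : X ≠ 0) (hXbdd : BddAbove (Set.range X))
    (r : ℝ) (hr : 0 < r)
    (Ωstar : Set (∀ i, Ω i)) (hΩstar : MeasurableSet Ωstar)
    (hcert : ∀ x : ∀ i, Ω i, ∃ b : Fin n → ℝ, (∀ i, 0 ≤ b i) ∧
      (∑ i, (b i) ^ 2 ≤ r * X x) ∧
      ∀ y : ∀ i, Ω i,
        X x - ∑ i ∈ Finset.univ.filter (fun i => x i ≠ y i), b i ≤ X y) :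
    ∀ m : ℝ, IsMedian X m →
      |(∫ x, X x ∂(prodMeasure Ω)) - m| ≤
        48 * Real.sqrt (r * ∫ x, X x ∂(prodMeasure Ω)) + 64 * Real.sqrt r +
          4 * essSup X (prodMeasure Ω) * ((prodMeasure Ω) Ωstar).toReal := by
  intro m hm
  obtain ⟨M, hM'⟩ := hXbdd
  have hM : ∀ x, X x ≤ M := fun x => hM' ⟨x, rfl⟩
  have hab : ∀ x, |X x| ≤ M := fun x => by rw [abs_of_nonneg (hX0 x)]; exact hM x
  have hv := ES.var_le X hXmeas M hX0 hM r hcert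
  have hLp : MemLp X 2 (prodMeasure Ω) :=
    MemLp.of_bound hXmeas.aestronglyMeasurable M (Filter.Eventually.of_forall hab)
  have hvar := ProbabilityTheory.variance_eq_sub hLp
  simp only [Pi.pow_apply] at hvar
  have hE : 0 ≤ ∫ x, X x ∂(prodMeasure Ω) := integral_nonneg hX0
  set E := ∫ x, X x ∂(prodMeasure Ω) with hEdef
  have hess : 0 ≤ essSup X (prodMeasure Ω) := by
    refine Filter.le_limsup_of_frequently_le (Filter.Frequently.of_forall hX0) ?_
    exact ⟨M, Filter.eventually_map.2 (Filter.Eventually.of_forall hM)⟩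
  have hthird : 0 ≤ 4 * essSup X (prodMeasure Ω) * ((prodMeasure Ω) Ωstar).toReal := by
    positivity
  have hsr : 0 ≤ Real.sqrt r := Real.sqrt_nonneg r
  have hs := Real.sqrt_nonneg (r * E)
  have hss := Real.sq_sqrt (mul_nonneg hr.le hE)
  suffices h : |E - m| ≤ 2 * Real.sqrt (r * E) by linarith
  by_contra! hlt
  have hc : 0 < |E - m| := by linarith
  have ch := ProbabilityTheory.meas_ge_le_variance_div_sq hLp hc
  have half : (1 : ℝ) / 2 ≤ ((prodMeasure Ω) {ω | |E - m| ≤ |X ω - E|}).toReal := by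
    rcases le_total E m with h | h
    · refine hm.2.trans (ENNReal.toReal_mono (measure_ne_top _ _) (measure_mono fun x hx => ?_))
      simp only [Set.mem_setOf_eq] at hx ⊢
      rw [abs_of_nonpos (by linarith), abs_of_nonneg (by linarith)]
      linarith
    · refine hm.1.trans (ENNReal.toReal_mono (measure_ne_top _ _) (measure_mono fun x hx => ?_))
      simp only [Set.mem_setOf_eq] at hx ⊢
      rw [abs_of_nonneg (by linarith), abs_of_nonpos (by linarith)]
      linarith
  have ch2 := ENNReal.toReal_mono ENNReal.ofReal_ne_top ch
  rw [ENNReal.toReal_ofReal (div_nonneg (ProbabilityTheory.variance_nonneg _ _) (sq_nonneg _))]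
    at ch2
  have ch3 := half.trans ch2
  rw [le_div_iff₀ (by positivity), hvar] at ch3
  nlinarith
end

section
/- Let (Ω_i, Σ_i, Pr_i), i = 1,…,n, be probability spaces and let (Ω, Σ, Pr) be their product. For a set A ⊆ Ω and a point x ∈ Ω, let d(x,A) = sup over all b ∈ ℝⁿ with ‖b‖₂ = 1 of min over y ∈ A of Σ_{i : x_i ≠ y_i} b_i, and let A_t = {x ∈ Ω : d(x,A) ≤ t}. Then for every measurable A ⊆ Ω and every t ≥ 0, Pr(A)·Pr(Ω ∖ A_t) ≤ exp(−t²/4). -/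
open MeasureTheory
open scoped Classical

/-- Talagrand's convex distance `d(x, A)`: the supremum over unit vectors
`b ∈ ℝⁿ` (i.e. `‖b‖₂ = 1`) of the infimum over `y ∈ A` of `Σ_{i : x i ≠ y i} b i`. -/
noncomputable def talagrandDist {n : ℕ} {Ω : Fin n → Type}
    (x : ∀ i, Ω i) (A : Set (∀ i, Ω i)) : ℝ :=
  ⨆ b : {b : Fin n → ℝ // ∑ i, (b i) ^ 2 = 1},
    ⨅ y : A, ∑ i ∈ Finset.univ.filter (fun i => x i ≠ (y : ∀ i, Ω i) i),
      (b : Fin n → ℝ) i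

lemma tal_num1 (u : ℝ) (h0 : 0 ≤ u) (h1 : u ≤ 1/2) :
    Real.exp (u - u^2) + Real.exp (-u) ≤ 2 := by
  have h := Real.cosh_le_exp_half_sq (u - u^2/2)
  have e1 : Real.exp (u - u^2) = Real.exp (-(u^2/2)) * Real.exp (u - u^2/2) := by
    rw [← Real.exp_add]; ring_nf
  have e2 : Real.exp (-u) = Real.exp (-(u^2/2)) * Real.exp (-(u - u^2/2)) := by
    rw [← Real.exp_add]; ring_nf
  rw [Real.cosh_eq] at h
  have h3 : Real.exp (-(u^2/2)) * Real.exp ((u - u^2/2)^2/2) ≤ 1 := by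
    rw [← Real.exp_add, Real.exp_le_one_iff]
    have : 0 ≤ u^3 := by positivity
    nlinarith [mul_nonneg this (by linarith : 0 ≤ 1/2 - u)]
  have hp := Real.exp_pos (-(u^2/2))
  rw [e1, e2]
  nlinarith

noncomputable def talLam (a b : ENNReal) : ℝ :=
  if (a / b).toReal ≤ Real.exp (-(1/2)) then 0 else min 1 (1 + 2 * Real.log (a / b).toReal)

lemma talLam_nonneg (a b : ENNReal) : 0 ≤ talLam a b := by
  unfold talLam
  split_ifs with h
  · exact le_rfl
  · push Not at h
    have := (Real.lt_log_iff_exp_lt ((Real.exp_pos _).trans h)).2 h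
    exact le_min zero_le_one (by linarith)

lemma talLam_le_one (a b : ENNReal) : talLam a b ≤ 1 := by
  unfold talLam
  split_ifs with h
  · exact zero_le_one
  · exact min_le_left _ _

lemma tal_num2 (a b : ENNReal) (hb0 : b ≠ 0) (hb1 : b ≤ 1) (hab : a ≤ b) :
    (a⁻¹) ^ (talLam a b) * (b⁻¹) ^ (1 - talLam a b) *
      ENNReal.ofReal (Real.exp ((1 - talLam a b)^2/4)) + b⁻¹ * b⁻¹ * a ≤ 2 * b⁻¹ := by
  have hbt : b ≠ ⊤ := ne_top_of_le_ne_top ENNReal.one_ne_top hb1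
  have hat : a ≠ ⊤ := ne_top_of_le_ne_top hbt hab
  have hrt : a / b ≠ ⊤ := ENNReal.div_ne_top hat hb0
  by_cases h : (a / b).toReal ≤ Real.exp (-(1/2))
  · have hl : talLam a b = 0 := by unfold talLam; rw [if_pos h]
    rw [hl]
    have e : b⁻¹ * b⁻¹ * a = b⁻¹ * (a / b) := by rw [div_eq_mul_inv]; ring
    rw [e, ENNReal.rpow_zero, one_mul, sub_zero, ENNReal.rpow_one, ← mul_add, mul_comm 2]
    gcongr
    rw [← ENNReal.ofReal_toReal hrt, ← ENNReal.ofReal_add (Real.exp_pos _).le ENNReal.toReal_nonneg]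
    rw [show (2 : ENNReal) = ENNReal.ofReal 2 by simp]
    apply ENNReal.ofReal_le_ofReal
    have := tal_num1 (1/2) (by norm_num) le_rfl
    norm_num at this h ⊢
    linarith
  · have h' := h
    push Not at h
    have ha0 : a ≠ 0 := by
      rintro rfl
      simp at h
      exact absurd h (not_lt.2 (Real.exp_pos _).le)
    obtain ⟨x, hx⟩ : ∃ x : ℝ, a = ENNReal.ofReal (Real.exp x) :=
      ⟨Real.log a.toReal, by
        rw [Real.exp_log (ENNReal.toReal_pos ha0 hat), ENNReal.ofReal_toReal hat]⟩
    obtain ⟨y, hy⟩ : ∃ y : ℝ, b = ENNReal.ofReal (Real.exp y) :=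
      ⟨Real.log b.toReal, by
        rw [Real.exp_log (ENNReal.toReal_pos hb0 hbt), ENNReal.ofReal_toReal hbt]⟩
    have hr : (a / b).toReal = Real.exp (x - y) := by
      rw [hx, hy, ← ENNReal.ofReal_div_of_pos (Real.exp_pos _), ← Real.exp_sub,
        ENNReal.toReal_ofReal (Real.exp_pos _).le]
    have hxy : x ≤ y := by
      rw [hx, hy, ENNReal.ofReal_le_ofReal_iff (Real.exp_pos _).le] at hab
      exact Real.exp_le_exp.1 hab
    have hl : talLam a b = 1 + 2 * (x - y) := by
      unfold talLam
      rw [if_neg h', hr, Real.log_exp]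
      exact min_eq_right (by linarith)
    rw [hr, Real.exp_lt_exp] at h
    rw [hl, hx, hy, ← ENNReal.ofReal_inv_of_pos (Real.exp_pos _),
      ← ENNReal.ofReal_inv_of_pos (Real.exp_pos _), ← Real.exp_neg, ← Real.exp_neg,
      ENNReal.ofReal_rpow_of_pos (Real.exp_pos _), ENNReal.ofReal_rpow_of_pos (Real.exp_pos _),
      ← Real.exp_mul, ← Real.exp_mul]
    rw [show (2 : ENNReal) = ENNReal.ofReal 2 by simp]
    simp only [← ENNReal.ofReal_mul (Real.exp_pos _).le,
      ← ENNReal.ofReal_mul (zero_le_two : (0:ℝ) ≤ 2), ← Real.exp_add]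
    rw [← ENNReal.ofReal_add (Real.exp_pos _).le (Real.exp_pos _).le]
    apply ENNReal.ofReal_le_ofReal
    have := tal_num1 (y - x) (by linarith) (by linarith)
    have e1 : Real.exp (-x * (1 + 2 * (x - y)) + -y * (1 - (1 + 2 * (x - y))) +
        (1 - (1 + 2 * (x - y))) ^ 2 / 4) = Real.exp (-y) * Real.exp ((y - x) - (y - x)^2) := by
      rw [← Real.exp_add]; ring_nf
    have e2 : Real.exp (-y + -y + x) = Real.exp (-y) * Real.exp (-(y-x)) := by
      rw [← Real.exp_add]; ring_nf
    rw [e1, e2, ← mul_add, mul_comm 2]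
    exact mul_le_mul_of_nonneg_left this (Real.exp_pos _).le

/-- final algebra: `J + p / b ^ 2 ≤ 2 / b` implies `J ≤ 1 / p`. -/
lemma tal_num3 (J p b : ENNReal) (hb0 : b ≠ 0) (hb1 : b ≤ 1) (hp1 : p ≤ 1)
    (h : J + b⁻¹ * b⁻¹ * p ≤ 2 * b⁻¹) : J ≤ p⁻¹ := by
  by_cases hp0 : p = 0
  · simp [hp0]
  have hbt : b ≠ ⊤ := ne_top_of_le_ne_top ENNReal.one_ne_top hb1
  have hpt : p ≠ ⊤ := ne_top_of_le_ne_top ENNReal.one_ne_top hp1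
  have hR : (2 * b⁻¹) ≠ ⊤ := ENNReal.mul_ne_top (by simp) (by simpa using hb0)
  have hJ : J ≠ ⊤ := ne_top_of_le_ne_top hR (le_self_add.trans h)
  have hP : b⁻¹ * b⁻¹ * p ≠ ⊤ := ne_top_of_le_ne_top hR (le_add_self.trans h)
  have h2 := ENNReal.toReal_mono hR h
  rw [ENNReal.toReal_add hJ hP] at h2
  simp only [ENNReal.toReal_mul, ENNReal.toReal_inv, ENNReal.toReal_ofNat] at h2
  have hp := ENNReal.toReal_pos hp0 hpt
  rw [← ENNReal.ofReal_toReal hJ, ← ENNReal.ofReal_toReal hpt, ← ENNReal.ofReal_inv_of_pos hp]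
  apply ENNReal.ofReal_le_ofReal
  rw [← one_div, le_div_iff₀ hp]
  set q := p.toReal
  set c := b.toReal⁻¹
  nlinarith [sq_nonneg (c * q - 1)]

lemma tal_real (l be : ℝ) (hl : l ≤ 1) : (1 - l) * max be 0 ≤ be ^ 2 + (1 - l)^2/4 := by
  rcases le_total be 0 with h | h
  · rw [max_eq_right h]; nlinarith [sq_nonneg be, sq_nonneg (1-l)]
  · rw [max_eq_left h]; nlinarith [sq_nonneg (be - (1-l)/2)]

lemma tal_comb (G1 G2 : ENNReal) (h1 : 1 ≤ G1) (h2 : 1 ≤ G2) (l L : ℝ) (hl0 : 0 < l) (hl1 : l < 1)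
    (h : G1 ^ l * G2 ^ (1 - l) * ENNReal.ofReal (Real.exp ((1-l)^2/4)) ≤
      ENNReal.ofReal (Real.exp L)) :
    ∃ L1 L2 : ℝ, G1 ≤ ENNReal.ofReal (Real.exp L1) ∧ G2 ≤ ENNReal.ofReal (Real.exp L2) ∧
      l * L1 + (1 - l) * L2 + (1-l)^2/4 ≤ L := by
  have hG1 : G1 ≠ 0 := (zero_lt_one.trans_le h1).ne'
  have hG2 : G2 ≠ 0 := (zero_lt_one.trans_le h2).ne'
  have hE : ENNReal.ofReal (Real.exp ((1-l)^2/4)) ≠ 0 := by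
    simpa using Real.exp_pos _
  have t1 : G1 ≠ ⊤ := by
    rintro rfl
    rw [ENNReal.top_rpow_of_pos hl0, ENNReal.top_mul (by simp [hG2, hl1.le]), ENNReal.top_mul hE] at h
    simp at h
  have t2 : G2 ≠ ⊤ := by
    rintro rfl
    rw [ENNReal.top_rpow_of_pos (by linarith), ENNReal.mul_top (by simp [hG1, hl0.le]),
      ENNReal.top_mul hE] at h
    simp at h
  obtain ⟨x, hx⟩ : ∃ x : ℝ, G1 = ENNReal.ofReal (Real.exp x) :=
    ⟨Real.log G1.toReal, by
      rw [Real.exp_log (ENNReal.toReal_pos hG1 t1), ENNReal.ofReal_toReal t1]⟩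
  obtain ⟨y, hy⟩ : ∃ y : ℝ, G2 = ENNReal.ofReal (Real.exp y) :=
    ⟨Real.log G2.toReal, by
      rw [Real.exp_log (ENNReal.toReal_pos hG2 t2), ENNReal.ofReal_toReal t2]⟩
  refine ⟨x, y, hx.le, hy.le, ?_⟩
  rw [hx, hy, ENNReal.ofReal_rpow_of_pos (Real.exp_pos _),
    ENNReal.ofReal_rpow_of_pos (Real.exp_pos _), ← Real.exp_mul, ← Real.exp_mul,
    ← ENNReal.ofReal_mul (Real.exp_pos _).le, ← Real.exp_add,
    ← ENNReal.ofReal_mul (Real.exp_pos _).le, ← Real.exp_add,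
    ENNReal.ofReal_le_ofReal_iff (Real.exp_pos _).le, Real.exp_le_exp] at h
  linarith

/-- the pointwise combination step, abstractly -/
lemma tal_point (G1 G2 : ENNReal) (h1 : 1 ≤ G1) (h2 : 1 ≤ G2) (l L be s : ℝ) (hl0 : 0 ≤ l)
    (hl1 : l ≤ 1)
    (h : G1 ^ l * G2 ^ (1 - l) * ENNReal.ofReal (Real.exp ((1-l)^2/4)) ≤
      ENNReal.ofReal (Real.exp L)) (P : ℝ → Prop)
    (H1 : ∀ L1 : ℝ, G1 ≤ ENNReal.ofReal (Real.exp L1) → ∃ v ≤ s + L1, P v)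
    (H2 : ∀ L2 : ℝ, G2 ≤ ENNReal.ofReal (Real.exp L2) → ∃ v ≤ s + L2 + max be 0, P v) :
    ∃ v ≤ be ^ 2 + s + L, P v := by
  have hr := tal_real l be hl1
  rcases hl0.eq_or_lt with rfl | hl0
  · rw [ENNReal.rpow_zero, one_mul, sub_zero, ENNReal.rpow_one] at h
    have h3 : G2 ≤ ENNReal.ofReal (Real.exp (L - 1/4)) := by
      rw [Real.exp_sub, ENNReal.ofReal_div_of_pos (Real.exp_pos _)]
      rw [ENNReal.le_div_iff_mul_le (Or.inl (by simpa using Real.exp_pos _)) (Or.inl (by simp))]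
      simpa using h
    obtain ⟨v, hv, hP⟩ := H2 _ h3
    exact ⟨v, by linarith, hP⟩
  rcases hl1.eq_or_lt with rfl | hl1
  · simp at h
    obtain ⟨v, hv, hP⟩ := H1 _ h
    exact ⟨v, by nlinarith [sq_nonneg be], hP⟩
  obtain ⟨L1, L2, g1, g2, hL⟩ := tal_comb G1 G2 h1 h2 l L hl0 hl1 h
  obtain ⟨v1, hv1, hP1⟩ := H1 _ g1
  obtain ⟨v2, hv2, hP2⟩ := H2 _ g2
  by_contra hc
  push Not at hc
  have c1 : be^2 + s + L < v1 := by
    by_contra h'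
    exact hc v1 (not_lt.1 h') hP1
  have c2 : be^2 + s + L < v2 := by
    by_contra h'
    exact hc v2 (not_lt.1 h') hP2
  nlinarith [mul_lt_mul_of_pos_left (c1.trans_le hv1) hl0,
    mul_lt_mul_of_pos_left (c2.trans_le hv2) (sub_pos.2 hl1)]

theorem tal_key (n : ℕ) : ∀ (Ω : Fin n → Type) [∀ i, MeasurableSpace (Ω i)]
    (μ : ∀ i, Measure (Ω i)) [∀ i, IsProbabilityMeasure (μ i)]
    (T : Type) [MeasurableSpace T] (A : Set (T × (∀ i, Ω i))), MeasurableSet A →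
    ∃ G : T × (∀ i, Ω i) → ENNReal, Measurable G ∧ (∀ p, 1 ≤ G p) ∧
      (∀ (τ : T) (x : ∀ i, Ω i) (L : ℝ), G (τ, x) ≤ ENNReal.ofReal (Real.exp L) →
        ∀ b : Fin n → ℝ, ∃ y, (τ, y) ∈ A ∧
          ∑ i, (if x i ≠ y i then b i else 0) ≤ ∑ i, b i ^ 2 + L) ∧
      ∀ τ : T, ∫⁻ x, G (τ, x) ∂(Measure.pi μ) ≤ (Measure.pi μ {x | (τ, x) ∈ A})⁻¹ := by
  induction n with
  | zero =>
    intro Ω _ μ _ T _ A hA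
    refine ⟨fun p => if p ∈ A then 1 else ⊤,
      Measurable.ite hA measurable_const measurable_const, ?_, ?_, ?_⟩
    · intro p; dsimp only; split_ifs <;> simp
    · intro τ x L h b
      have hx : (τ, x) ∈ A := by
        by_contra hx
        simp [hx] at h
      simp only [hx, if_true] at h
      refine ⟨x, hx, ?_⟩
      simp only [Finset.univ_eq_empty, Finset.sum_empty, zero_add]
      rw [ENNReal.one_le_ofReal, Real.one_le_exp_iff] at h
      exact h
    · intro τ
      have hm : MeasurableSet {x : ∀ i, Ω i | (τ, x) ∈ A} := measurable_prodMk_left hA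
      have hm2 : Measurable fun x : ∀ i, Ω i => if (τ, x) ∈ A then (1 : ENNReal) else ⊤ :=
        Measurable.ite hm measurable_const measurable_const
      rw [Measure.pi_of_empty μ, lintegral_dirac' _ hm2, Measure.dirac_apply' _ hm]
      split_ifs with h
      · simp [Set.indicator, h]
      · simp [Set.indicator, h]
  | succ n ih =>
    intro Ω _ μ _ T _ A hA
    set e := MeasurableEquiv.piFinSuccAbove Ω 0 with he
    let Ω' : Fin n → Type := fun j => Ω (Fin.succAbove 0 j)
    let ν : Measure (∀ j, Ω' j) := Measure.pi fun j => μ (Fin.succAbove 0 j)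
    have hmp : MeasurePreserving e (Measure.pi μ) ((μ 0).prod ν) :=
      measurePreserving_piFinSuccAbove μ 0
    let A1 : Set ((T × Ω 0) × (∀ j, Ω' j)) := {p | (p.1.1, e.symm (p.1.2, p.2)) ∈ A}
    have hA1 : MeasurableSet A1 := by
      have : Measurable fun p : (T × Ω 0) × (∀ j, Ω' j) => (p.1.1, e.symm (p.1.2, p.2)) := by
        refine Measurable.prodMk (by fun_prop) (e.symm.measurable.comp (by fun_prop))
      exact this hA
    let A2 : Set ((T × (∀ j, Ω' j)) × Ω 0) := {p | ((p.1.1, p.2), p.1.2) ∈ A1}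
    have hA2 : MeasurableSet A2 := by
      have : Measurable fun p : (T × (∀ j, Ω' j)) × Ω 0 => ((p.1.1, p.2), p.1.2) := by
        fun_prop
      exact this hA1
    let B : Set (T × (∀ j, Ω' j)) := {q | 0 < μ 0 (Prod.mk q ⁻¹' A2)}
    have hB : MeasurableSet B :=
      measurableSet_lt measurable_const (measurable_measure_prodMk_left hA2)
    obtain ⟨G1, mG1, oG1, pG1, iG1⟩ := ih Ω' (fun j => μ (Fin.succAbove 0 j)) (T × Ω 0) A1 hA1
    obtain ⟨G2, mG2, oG2, pG2, iG2⟩ := ih Ω' (fun j => μ (Fin.succAbove 0 j)) T B hB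
    let a : T × Ω 0 → ENNReal := fun q => ν (Prod.mk q ⁻¹' A1)
    let b : T → ENNReal := fun τ => ν (Prod.mk τ ⁻¹' B)
    have ma : Measurable a := measurable_measure_prodMk_left hA1
    have mb : Measurable b := measurable_measure_prodMk_left hB
    let l : T × Ω 0 → ℝ := fun q => talLam (a q) (b q.1)
    have ml : Measurable l := by
      have mr : Measurable fun q : T × Ω 0 => (a q / b q.1).toReal :=
        (ma.div (mb.comp measurable_fst)).ennreal_toReal
      refine Measurable.ite (measurableSet_le mr measurable_const) measurable_const ?_
      exact measurable_const.min (((Real.measurable_log.comp mr).const_mul 2).const_add 1)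
    let F : (T × Ω 0) × (∀ j, Ω' j) → ENNReal := fun p =>
      G1 p ^ (l p.1) * G2 (p.1.1, p.2) ^ (1 - l p.1) *
        ENNReal.ofReal (Real.exp ((1 - l p.1)^2/4))
    have mF : Measurable F := by
      have m1 : Measurable fun p : (T × Ω 0) × (∀ j, Ω' j) => l p.1 := ml.comp measurable_fst
      refine ((mG1.pow m1).mul ((mG2.comp (by fun_prop)).pow (m1.const_sub 1))).mul ?_
      exact (Real.measurable_exp.comp (((m1.const_sub 1).pow_const 2).div_const 4)).ennreal_ofReal
    let G : T × (∀ i, Ω i) → ENNReal := fun p => F ((p.1, (e p.2).1), (e p.2).2)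
    refine ⟨G, ?_, ?_, ?_, ?_⟩
    · have m1 : Measurable fun p : T × (∀ i, Ω i) => e p.2 := e.measurable.comp measurable_snd
      exact mF.comp ((measurable_fst.prodMk (measurable_fst.comp m1)).prodMk
        (measurable_snd.comp m1))
    · intro p
      have key : ∀ (g : ENNReal) (s : ℝ), 1 ≤ g → 0 ≤ s → 1 ≤ g ^ s := by
        intro g s hg hs
        simpa using ENNReal.rpow_le_rpow hg hs
      refine one_le_mul (one_le_mul (key _ _ (oG1 _) (talLam_nonneg _ _))
        (key _ _ (oG2 _) (sub_nonneg.2 (talLam_le_one _ _)))) ?_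
      rw [ENNReal.one_le_ofReal, Real.one_le_exp_iff]
      positivity
    · intro τ x L h c
      have hx0 : ∀ (ω : Ω 0) (z : ∀ j, Ω' j), e.symm (ω, z) 0 = ω := fun ω z =>
        congrArg Prod.fst (e.apply_symm_apply (ω, z))
      have hxs : ∀ (ω : Ω 0) (z : ∀ j, Ω' j) j, e.symm (ω, z) (Fin.succAbove 0 j) = z j :=
        fun ω z j => congrFun (congrArg Prod.snd (e.apply_symm_apply (ω, z))) j
      obtain ⟨v, hv, y, hy, rfl⟩ := tal_point _ _ (oG1 _) (oG2 _) _ L (c 0)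
        (∑ j, c (Fin.succAbove 0 j) ^ 2) (talLam_nonneg _ _) (talLam_le_one _ _) h
        (fun v => ∃ y, (τ, y) ∈ A ∧ ∑ i, (if x i ≠ y i then c i else 0) = v)
        (by
          intro L1 h1
          obtain ⟨y, hy, hs⟩ := pG1 _ _ L1 h1 (fun j => c (Fin.succAbove 0 j))
          refine ⟨_, ?_, e.symm (x 0, y), hy, rfl⟩
          rw [Fin.sum_univ_succAbove _ 0, hx0]
          simp only [hxs]
          have hs' : ∑ j, (if x (Fin.succAbove 0 j) ≠ y j then c (Fin.succAbove 0 j) else 0) ≤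
            ∑ j, c (Fin.succAbove 0 j) ^ 2 + L1 := hs
          have : (if x 0 ≠ x 0 then c 0 else 0) = 0 := by simp
          linarith)
        (by
          intro L2 h2
          obtain ⟨y, hy, hs⟩ := pG2 _ _ L2 h2 (fun j => c (Fin.succAbove 0 j))
          obtain ⟨ω, hω⟩ := nonempty_of_measure_ne_zero (ne_of_gt hy)
          refine ⟨_, ?_, e.symm (ω, y), hω, rfl⟩
          rw [Fin.sum_univ_succAbove _ 0, hx0]
          simp only [hxs]
          have : (if x 0 ≠ ω then c 0 else 0) ≤ max (c 0) 0 := by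
            split_ifs <;> simp
          have hs' : ∑ j, (if x (Fin.succAbove 0 j) ≠ y j then c (Fin.succAbove 0 j) else 0) ≤
            ∑ j, c (Fin.succAbove 0 j) ^ 2 + L2 := hs
          linarith)
      refine ⟨y, hy, ?_⟩
      rw [Fin.sum_univ_succAbove (fun i => c i ^ 2) 0]
      exact hv
    · intro τ
      have mFτ : Measurable fun q : Ω 0 × (∀ j, Ω' j) => F ((τ, q.1), q.2) :=
        mF.comp (by fun_prop)
      have hA1τ : MeasurableSet {q : Ω 0 × (∀ j, Ω' j) | ((τ, q.1), q.2) ∈ A1} := by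
        have : Measurable fun q : Ω 0 × (∀ j, Ω' j) => ((τ, q.1), q.2) := by fun_prop
        exact this hA1
      have hBτ : MeasurableSet {z : (∀ j, Ω' j) | (τ, z) ∈ B} := measurable_prodMk_left hB
      have hG : ∫⁻ x, G (τ, x) ∂(Measure.pi μ) = ∫⁻ ω, ∫⁻ z, F ((τ, ω), z) ∂ν ∂(μ 0) := by
        rw [← lintegral_prod (fun q : Ω 0 × (∀ j, Ω' j) => F ((τ, q.1), q.2)) mFτ.aemeasurable]
        exact hmp.lintegral_comp mFτ
      have hP : Measure.pi μ {x | (τ, x) ∈ A} = ∫⁻ ω, a (τ, ω) ∂(μ 0) := by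
        have h1 := Measure.prod_apply (μ := μ 0) (ν := ν) hA1τ
        rw [← hmp.measure_preimage hA1τ.nullMeasurableSet] at h1
        have h2 : e ⁻¹' {q : Ω 0 × (∀ j, Ω' j) | ((τ, q.1), q.2) ∈ A1} = {x | (τ, x) ∈ A} := by
          ext x
          change (τ, e.symm (e x)) ∈ A ↔ (τ, x) ∈ A
          rw [e.symm_apply_apply]
        rw [h2] at h1
        exact h1
      have hae : ∀ᵐ ω ∂(μ 0), a (τ, ω) ≤ b τ := by
        have hC : MeasurableSet {q : Ω 0 × (∀ j, Ω' j) |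
            ((τ, q.1), q.2) ∈ A1 → (τ, q.2) ∈ B} :=
          hA1τ.imp (measurable_snd hBτ)
        have := (Measure.ae_ae_comm (μ := μ 0) (ν := ν)
          (p := fun ω z => ((τ, ω), z) ∈ A1 → (τ, z) ∈ B) hC).2 (by
            refine Filter.Eventually.of_forall fun z => ?_
            by_cases hz : (τ, z) ∈ B
            · exact Filter.Eventually.of_forall fun ω _ => hz
            · have h0 : μ 0 (Prod.mk (τ, z) ⁻¹' A2) = 0 := by
                by_contra h0
                exact hz (pos_iff_ne_zero.2 h0)
              filter_upwards [measure_eq_zero_iff_ae_notMem.1 h0] with ω hω hω'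
              exact absurd hω' hω)
        filter_upwards [this] with ω hω
        exact measure_mono_ae hω
      have maτ : Measurable fun ω => a (τ, ω) := ma.comp measurable_prodMk_left
      rw [hG, hP]
      by_cases hb0 : b τ = 0
      · have : ∫⁻ ω, a (τ, ω) ∂(μ 0) = 0 := by
          rw [lintegral_eq_zero_iff maτ]
          filter_upwards [hae] with ω hω
          exact le_antisymm (hω.trans hb0.le) zero_le
        rw [this]; simp
      have hb1 : b τ ≤ 1 := prob_le_one
      refine tal_num3 _ _ (b τ) hb0 hb1 ?_ ?_
      · rw [← hP]; exact prob_le_one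
      rw [← lintegral_const_mul _ maτ]
      rw [← lintegral_add_right _ (maτ.const_mul _)]
      calc _ ≤ ∫⁻ ω, 2 * (b τ)⁻¹ ∂(μ 0) := ?_
        _ = _ := by simp
      refine lintegral_mono_ae ?_
      filter_upwards [hae] with ω hω
      refine le_trans (add_le_add_left ?_ _) (tal_num2 (a (τ, ω)) (b τ) hb0 hb1 hω)
      have mF1 : Measurable fun z => G1 ((τ, ω), z) := mG1.comp measurable_prodMk_left
      have mF2 : Measurable fun z => G2 (τ, z) := mG2.comp measurable_prodMk_left
      have l0 : 0 ≤ l (τ, ω) := talLam_nonneg _ _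
      have l1 : l (τ, ω) ≤ 1 := talLam_le_one _ _
      calc ∫⁻ z, F ((τ, ω), z) ∂ν
          = (∫⁻ z, G1 ((τ, ω), z) ^ (l (τ, ω)) * G2 (τ, z) ^ (1 - l (τ, ω)) ∂ν) *
            ENNReal.ofReal (Real.exp ((1 - l (τ, ω))^2/4)) :=
            by rw [← lintegral_mul_const' _ _ ENNReal.ofReal_ne_top]
        _ ≤ _ := by
          refine mul_le_mul_left ?_ _
          refine (ENNReal.lintegral_mul_norm_pow_le mF1.aemeasurable mF2.aemeasurable l0
            (by linarith) (by ring)).trans ?_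
          exact mul_le_mul' (ENNReal.rpow_le_rpow (iG1 _) l0)
            (ENNReal.rpow_le_rpow (iG2 _) (by linarith))

theorem stmt_15 {n : ℕ} (Ω : Fin n → Type) [∀ i, MeasureSpace (Ω i)]
    [∀ i, IsProbabilityMeasure (volume : Measure (Ω i))]
    (A : Set (∀ i, Ω i)) (hA : MeasurableSet A) (t : ℝ) (ht : 0 ≤ t) :
    ((prodMeasure Ω) A).toReal *
        ((prodMeasure Ω) {x | ¬ talagrandDist x A ≤ t}).toReal ≤
      Real.exp (-t ^ 2 / 4) := by
  have hprob : IsProbabilityMeasure (prodMeasure Ω) := by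
    unfold prodMeasure; infer_instance
  rcases ht.eq_or_lt with rfl | ht0
  · simp only [ne_eq, OfNat.ofNat_ne_zero, not_false_eq_true, zero_pow, neg_zero, zero_div,
      Real.exp_zero]
    exact mul_le_one₀ measureReal_le_one ENNReal.toReal_nonneg measureReal_le_one
  obtain ⟨G, mG, oG, pG, iG⟩ := tal_key n Ω (fun i => (volume : Measure (Ω i))) Unit
    (Prod.snd ⁻¹' A) (measurable_snd hA)
  have hi : ∫⁻ x, G ((), x) ∂(prodMeasure Ω) ≤ (prodMeasure Ω A)⁻¹ := iG ()
  have mG' : Measurable fun x => G ((), x) := mG.comp measurable_prodMk_left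
  have hM := mul_meas_ge_le_lintegral (μ := prodMeasure Ω) mG'
    (ENNReal.ofReal (Real.exp (t^2/4)))
  have hsub : {x | ¬ talagrandDist x A ≤ t} ⊆
      {x | ENNReal.ofReal (Real.exp (t^2/4)) ≤ G ((), x)} := by
    intro x hx
    by_contra hlt
    simp only [Set.mem_ofPred_eq, not_le] at hlt
    apply hx
    refine Real.iSup_le (fun b => ?_) ht
    obtain ⟨y, hy, hs⟩ := pG () x _ hlt.le (fun i => t/2 * b.1 i)
    have hbd : BddBelow (Set.range fun y : A =>
        ∑ i ∈ Finset.univ.filter (fun i => x i ≠ (y : ∀ i, Ω i) i), (b : Fin n → ℝ) i) := by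
      refine ⟨-∑ i, |b.1 i|, ?_⟩
      rintro _ ⟨y, rfl⟩
      dsimp only
      rw [Finset.sum_filter, ← Finset.sum_neg_distrib]
      refine Finset.sum_le_sum fun i _ => ?_
      split_ifs
      · exact neg_abs_le _
      · simp
    refine (ciInf_le hbd ⟨y, hy⟩).trans ?_
    rw [Finset.sum_filter]
    have e1 : ∑ i, (if x i ≠ y i then t/2 * b.1 i else 0) =
        t/2 * ∑ i, (if x i ≠ y i then b.1 i else 0) := by
      rw [Finset.mul_sum]
      refine Finset.sum_congr rfl fun i _ => ?_
      split_ifs <;> simp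
    have e2 : ∑ i, (t/2 * b.1 i)^2 = (t/2)^2 := by
      simp only [mul_pow]
      rw [← Finset.mul_sum, b.2, mul_one]
    rw [e1, e2] at hs
    change ∑ i, (if x i ≠ y i then b.1 i else 0) ≤ t
    nlinarith
  have h1 : ENNReal.ofReal (Real.exp (t^2/4)) * prodMeasure Ω {x | ¬ talagrandDist x A ≤ t} ≤
      (prodMeasure Ω A)⁻¹ :=
    (mul_le_mul' le_rfl (measure_mono hsub)).trans (hM.trans hi)
  by_cases h0 : prodMeasure Ω A = 0
  · rw [h0]; simp [Real.exp_nonneg]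
  have h2 := ENNReal.toReal_mono (by simpa using h0) h1
  rw [ENNReal.toReal_mul, ENNReal.toReal_ofReal (Real.exp_pos _).le, ENNReal.toReal_inv] at h2
  have hp := ENNReal.toReal_pos h0 (measure_ne_top _ _)
  rw [← one_div, le_div_iff₀ hp] at h2
  rw [neg_div, Real.exp_neg, ← one_div, le_div_iff₀ (Real.exp_pos _)]
  linarith
end

section
/- If G is a finite bipartite simple graph, then the list chromatic index of G equals its chromatic index: χ'_ℓ(G) = χ'(G). -/
/-- An `L`-edge-colouring of a simple graph `G`. -/
def IsLEdgeColouring {V : Type} (G : SimpleGraph V) (L : Sym2 V → Finset ℕ)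
    (γ : Sym2 V → ℕ) : Prop :=
  (∀ e ∈ G.edgeSet, γ e ∈ L e) ∧
  ∀ e ∈ G.edgeSet, ∀ f ∈ G.edgeSet, e ≠ f → (∃ v, v ∈ e ∧ v ∈ f) → γ e ≠ γ f

/-- The chromatic index `χ'(G)`: the least `k` such that `G` has a proper edge
colouring using `k` colours. -/
noncomputable def chromIndex {V : Type} (G : SimpleGraph V) : ℕ :=
  sInf {k : ℕ | ∃ γ : Sym2 V → ℕ, (∀ e ∈ G.edgeSet, γ e < k) ∧
    ∀ e ∈ G.edgeSet, ∀ f ∈ G.edgeSet, e ≠ f → (∃ v, v ∈ e ∧ v ∈ f) → γ e ≠ γ f}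

/-- The list chromatic index `χ'_ℓ(G)`: the least `k` such that `G` has an
`L`-edge-colouring whenever all lists have size at least `k`. -/
noncomputable def listChromIndex {V : Type} (G : SimpleGraph V) : ℕ :=
  sInf {k : ℕ | ∀ L : Sym2 V → Finset ℕ,
    (∀ e ∈ G.edgeSet, k ≤ (L e).card) → ∃ γ, IsLEdgeColouring G L γ}

theorem galvin_kernel {E V : Type} [DecidableEq E] (a b : E → V) (c : E → ℕ) (n : ℕ) :
    ∀ T : Finset E, T.card = n →
    (∀ e ∈ T, ∀ f ∈ T, e ≠ f → (a e = a f ∨ b e = b f) → c e ≠ c f) →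
    ∃ K ⊆ T, (∀ e ∈ K, ∀ f ∈ K, e ≠ f → a e ≠ a f ∧ b e ≠ b f) ∧
      ∀ e ∈ T, e ∉ K → ∃ f ∈ K, (a e = a f ∧ c e < c f) ∨ (b e = b f ∧ c f < c e) := by
  classical
  induction n with
  | zero =>
    intro T hT _
    rw [Finset.card_eq_zero] at hT
    subst hT
    exact ⟨∅, by simp, by simp, by simp⟩
  | succ n ih =>
    intro T hT hc
    by_cases h : ∃ e ∈ T, ∃ f ∈ T, (∀ g ∈ T, a g = a e → c g ≤ c e) ∧ b e = b f ∧ c e < c f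
    · obtain ⟨e, he, f, hf, hetop, hb, hlt⟩ := h
      obtain ⟨K, hKT, hK, hdom⟩ := ih (T.erase f) (by rw [Finset.card_erase_of_mem hf, hT]; rfl)
        (fun e he f hf => hc e (Finset.mem_of_mem_erase he) f (Finset.mem_of_mem_erase hf))
      refine ⟨K, hKT.trans (Finset.erase_subset _ _), hK, ?_⟩
      intro g hg hgK
      by_cases hgf : g = f
      · subst hgf
        by_cases heK : e ∈ K
        · exact ⟨e, heK, Or.inr ⟨hb.symm, hlt⟩⟩
        · have hne : e ≠ g := by rintro rfl; omega
          obtain ⟨x, hx, hx'⟩ := hdom e (Finset.mem_erase.2 ⟨hne, he⟩) heK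
          rcases hx' with ⟨h1, h2⟩ | ⟨h1, h2⟩
          · have := hetop x (Finset.mem_of_mem_erase (hKT hx)) h1.symm
            omega
          · exact ⟨x, hx, Or.inr ⟨hb.symm.trans h1, h2.trans hlt⟩⟩
      · exact hdom g (Finset.mem_erase.2 ⟨hgf, hg⟩) hgK
    · push Not at h
      refine ⟨T.filter (fun e => ∀ g ∈ T, a g = a e → c g ≤ c e), Finset.filter_subset _ _, ?_, ?_⟩
      · intro e he f hf hne
        rw [Finset.mem_filter] at he hf
        refine ⟨fun hab => ?_, fun hbb => ?_⟩
        · have h1 := he.2 f hf.1 hab.symm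
          have h2 := hf.2 e he.1 hab
          exact hc e he.1 f hf.1 hne (Or.inl hab) (le_antisymm h2 h1)
        · have h1 := h e he.1 f hf.1 he.2 hbb
          have h2 := h f hf.1 e he.1 hf.2 hbb.symm
          exact hc e he.1 f hf.1 hne (Or.inr hbb) (le_antisymm h2 h1)
      · intro e he heK
        obtain ⟨f, hf, hmax⟩ := Finset.exists_max_image (T.filter (fun g => a g = a e)) c
          ⟨e, by simp [he]⟩
        rw [Finset.mem_filter] at hf
        have hftop : ∀ g ∈ T, a g = a f → c g ≤ c f := fun g hg hga =>
          hmax g (Finset.mem_filter.2 ⟨hg, hga.trans hf.2⟩)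
        have hfK : f ∈ T.filter (fun e => ∀ g ∈ T, a g = a e → c g ≤ c e) :=
          Finset.mem_filter.2 ⟨hf.1, hftop⟩
        have hne : e ≠ f := by rintro rfl; exact heK hfK
        refine ⟨f, hfK, Or.inl ⟨hf.2.symm, ?_⟩⟩
        exact lt_of_le_of_ne (hftop e he hf.2.symm) (hc e he f hf.1 hne (Or.inl hf.2.symm))

open Classical in
theorem galvin_list {E V : Type} (a b : E → V) (c : E → ℕ) (n : ℕ) :
    ∀ (S : Finset E) (L : E → Finset ℕ), S.card = n →
    (∀ e ∈ S, ∀ f ∈ S, e ≠ f → (a e = a f ∨ b e = b f) → c e ≠ c f) →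
    (∀ e ∈ S, (S.filter (fun f => (a e = a f ∧ c e < c f) ∨ (b e = b f ∧ c f < c e))).card
      < (L e).card) →
    ∃ γ : E → ℕ, (∀ e ∈ S, γ e ∈ L e) ∧
      ∀ e ∈ S, ∀ f ∈ S, e ≠ f → (a e = a f ∨ b e = b f) → γ e ≠ γ f := by
  induction n using Nat.strong_induction_on with
  | _ n ih =>
    intro S L hS hc hL
    rcases S.eq_empty_or_nonempty with rfl | ⟨e₀, he₀⟩
    · exact ⟨fun _ => 0, by simp, by simp⟩
    obtain ⟨x, hx⟩ : (L e₀).Nonempty := Finset.card_pos.1 (lt_of_le_of_lt (Nat.zero_le _) (hL e₀ he₀))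
    obtain ⟨K, hKT, hK, hdom⟩ := galvin_kernel a b c _ (S.filter (fun e => x ∈ L e)) rfl
      (fun e he f hf => hc e (Finset.mem_filter.1 he).1 f (Finset.mem_filter.1 hf).1)
    have hKS : K ⊆ S := hKT.trans (Finset.filter_subset _ _)
    have hKne : K.Nonempty := by
      by_cases h : e₀ ∈ K
      · exact ⟨_, h⟩
      · obtain ⟨f, hf, _⟩ := hdom e₀ (Finset.mem_filter.2 ⟨he₀, hx⟩) h
        exact ⟨f, hf⟩
    have hcard : (S \ K).card < n := by
      rw [← hS]
      apply Finset.card_lt_card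
      exact Finset.sdiff_ssubset hKS hKne
    obtain ⟨γ, h1, h2⟩ := ih _ hcard (S \ K) (fun e => (L e).erase x) rfl
      (fun e he f hf => hc e (Finset.mem_sdiff.1 he).1 f (Finset.mem_sdiff.1 hf).1) (by
        intro e he
        rw [Finset.mem_sdiff] at he
        have hle := hL e he.1
        by_cases hxe : x ∈ L e
        · obtain ⟨f, hf, hf'⟩ := hdom e (Finset.mem_filter.2 ⟨he.1, hxe⟩) he.2
          rw [Finset.card_erase_of_mem hxe]
          have : ((S \ K).filter (fun f => (a e = a f ∧ c e < c f) ∨ (b e = b f ∧ c f < c e))).card <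
            (S.filter (fun f => (a e = a f ∧ c e < c f) ∨ (b e = b f ∧ c f < c e))).card := by
            apply Finset.card_lt_card
            rw [Finset.ssubset_iff_of_subset (Finset.filter_subset_filter _ Finset.sdiff_subset)]
            exact ⟨f, Finset.mem_filter.2 ⟨hKS hf, hf'⟩, by simp [hf]⟩
          omega
        · rw [Finset.erase_eq_of_notMem hxe]
          exact lt_of_le_of_lt (Finset.card_le_card
            (Finset.filter_subset_filter _ Finset.sdiff_subset)) hle)
    refine ⟨fun e => if e ∈ K then x else γ e, ?_, ?_⟩
    · intro e he
      by_cases h : e ∈ K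
      · simpa [h] using (Finset.mem_filter.1 (hKT h)).2
      · simpa [h] using Finset.mem_of_mem_erase (h1 e (Finset.mem_sdiff.2 ⟨he, h⟩))
    · intro e he f hf hne hab
      by_cases hek : e ∈ K <;> by_cases hfk : f ∈ K
      · have := hK e hek f hfk hne
        tauto
      · simpa [hek, hfk] using
          (Finset.ne_of_mem_erase (h1 f (Finset.mem_sdiff.2 ⟨hf, hfk⟩))).symm
      · simpa [hek, hfk] using
          (Finset.ne_of_mem_erase (h1 e (Finset.mem_sdiff.2 ⟨he, hek⟩)))
      · simpa [hek, hfk] using h2 e (Finset.mem_sdiff.2 ⟨he, hek⟩) f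
          (Finset.mem_sdiff.2 ⟨hf, hfk⟩) hne hab

theorem stmt_16 :
    ∀ (V : Type) [Fintype V] (G : SimpleGraph V),
      -- G is bipartite
      G.Colorable 2 →
      listChromIndex G = chromIndex G := by
  classical
  intro V _ G hG
  unfold listChromIndex chromIndex
  congr 1
  ext k
  simp only [Set.mem_ofPred_eq]
  constructor
  · intro h
    obtain ⟨γ, h1, h2⟩ := h (fun _ => Finset.range k) (by simp)
    exact ⟨γ, fun e he => Finset.mem_range.1 (h1 e he), h2⟩
  · rintro ⟨c, hck, hc⟩ L hL
    obtain ⟨C⟩ := hG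
    have hp : ∀ e : Sym2 V, ∃ p : V × V, e ∈ G.edgeSet →
        e = s(p.1, p.2) ∧ C p.1 = 0 ∧ C p.2 = 1 := by
      intro e
      induction e using Sym2.ind with
      | _ u v =>
        by_cases hu : C u = 0
        · refine ⟨(u, v), fun h => ⟨rfl, hu, ?_⟩⟩
          have := C.valid (SimpleGraph.mem_edgeSet G |>.1 h)
          simp only
          omega
        · refine ⟨(v, u), fun h => ⟨Sym2.eq_swap, ?_, ?_⟩⟩
          · have := C.valid (SimpleGraph.mem_edgeSet G |>.1 h)
            simp only
            omega
          · simp only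
            omega
    choose p hp using hp
    have hshare : ∀ e ∈ G.edgeSet, ∀ f ∈ G.edgeSet,
        ((∃ v, v ∈ e ∧ v ∈ f) ↔ ((p e).1 = (p f).1 ∨ (p e).2 = (p f).2)) := by
      intro e he f hf
      obtain ⟨e1, e2, e3⟩ := hp e he
      obtain ⟨f1, f2, f3⟩ := hp f hf
      constructor
      · rintro ⟨v, hve, hvf⟩
        rw [e1, Sym2.mem_iff] at hve
        rw [f1, Sym2.mem_iff] at hvf
        rcases hve with h | h <;> rcases hvf with h' | h'
        · exact Or.inl (h.symm.trans h')
        · rw [← h] at e2; rw [← h'] at f3; rw [e2] at f3; exact absurd f3 (by decide)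
        · rw [← h] at e3; rw [← h'] at f2; rw [e3] at f2; exact absurd f2 (by decide)
        · exact Or.inr (h.symm.trans h')
      · rintro (h | h)
        · refine ⟨(p e).1, ?_, ?_⟩
          · exact (congrArg (fun z => (p e).1 ∈ z) e1).mpr (Sym2.mem_mk_left _ _)
          · rw [h]; exact (congrArg (fun z => (p f).1 ∈ z) f1).mpr (Sym2.mem_mk_left _ _)
        · refine ⟨(p e).2, ?_, ?_⟩
          · exact (congrArg (fun z => (p e).2 ∈ z) e1).mpr (Sym2.mem_mk_right _ _)
          · rw [h]; exact (congrArg (fun z => (p f).2 ∈ z) f1).mpr (Sym2.mem_mk_right _ _)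
    have hc' : ∀ e ∈ G.edgeFinset, ∀ f ∈ G.edgeFinset, e ≠ f →
        ((p e).1 = (p f).1 ∨ (p e).2 = (p f).2) → c e ≠ c f := by
      intro e he f hf hne h
      rw [SimpleGraph.mem_edgeFinset] at he hf
      exact hc e he f hf hne ((hshare e he f hf).2 h)
    obtain ⟨γ, h1, h2⟩ := galvin_list (fun e => (p e).1) (fun e => (p e).2) c _
      G.edgeFinset L rfl hc' (by
        intro e he
        have hk := hck e (SimpleGraph.mem_edgeFinset.1 he)
        refine lt_of_lt_of_le ?_ (hL e (SimpleGraph.mem_edgeFinset.1 he))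
        have : (G.edgeFinset.filter (fun f => ((p e).1 = (p f).1 ∧ c e < c f) ∨
            ((p e).2 = (p f).2 ∧ c f < c e))).card ≤ ((Finset.range k).erase (c e)).card := by
          apply Finset.card_le_card_of_injOn c
          · intro f hf
            simp only [Finset.coe_filter, Set.mem_ofPred_eq] at hf
            have := hck f (SimpleGraph.mem_edgeFinset.1 hf.1)
            simp only [Finset.coe_erase, Finset.coe_range, Set.mem_sdiff, Set.mem_Iio,
              Set.mem_singleton_iff]
            omega
          · intro f hf g hg hfg
            simp only [Finset.coe_filter, Set.mem_ofPred_eq] at hf hg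
            by_contra hne
            refine hc' f hf.1 g hg.1 hne ?_ hfg
            rcases hf.2 with ⟨h, h'⟩ | ⟨h, h'⟩ <;> rcases hg.2 with ⟨i, i'⟩ | ⟨i, i'⟩
            · exact Or.inl (h.symm.trans i)
            · omega
            · omega
            · exact Or.inr (h.symm.trans i)
        rw [Finset.card_erase_of_mem (Finset.mem_range.2 hk), Finset.card_range] at this
        omega)
    refine ⟨γ, fun e he => h1 e (SimpleGraph.mem_edgeFinset.2 he), ?_⟩
    intro e he f hf hne hv
    exact h2 e (SimpleGraph.mem_edgeFinset.2 he) f (SimpleGraph.mem_edgeFinset.2 hf) hne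
      ((hshare e he f hf).1 hv)
end
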